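/- There exists a constant C > 0 such that for all real x ≥ 2, |Σ_{n ≤ x} μ(n) ω(n)| ≤ C · x / log x, where the sum runs over positive integers n ≤ x. -/

import Mathlib

open Finset ArithmeticFunction Real

/-!
The inequality `3 + 4 cos θ + cos 2θ ≥ 0`, combined with the bounds `ζ(s), ζ'(s) ≪ |t|^δ` from
Euler–Maclaurin summation, shows that for every `δ > 0` one has `|ζ(s)| ≫ |t|^(-δ)` in a
neighbourhood of width `≫ |t|^(-δ)` of the line `Re s = 1`. By Cauchy's estimates every derivative
of `1 / (s (s + 1) ζ(s))` is then `O(|t|^(-3/2))` on `Re s ≥ 1`, so `k` integrations by parts in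
Perron's formula with the weight `(1 - n / x)₊`, on the line `Re s = 1 + 1 / (1 + log x)`, and an
unsmoothing step give `M(y) ≪ y / (log y)^k` for the Mertens function, for every `k`.

Interchanging the sums, `∑_{n ≤ x} μ(n) ω(n) = ∑_{p ≤ x} S_p(x)`, where `S_p(y)` is the sum of
`μ(n)` over the multiples `n ≤ y` of `p`. Since `S_p(y) = S_p(y / p) - M(y / p)`, the estimate with
`k = 2` yields `S_p(x) ≪ f(x / p)` for the majorant `f(y) = y / (4 + log y)²`, and Chebyshev's bound
gives `∑_{p ≤ x} f(x / p) ≪ x / log x`.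
-/

/-! ### Euler–Maclaurin summation for `ζ` -/

/-- The fractional part cut off to `u > N`. Its Mellin transform at `-s` is the integral
`∫_N^∞ {u} u^(-s-1) du` of the truncated Euler–Maclaurin formula for `ζ(s)`. -/
noncomputable def fractTail (N : ℕ) : ℝ → ℂ :=
  (Set.Ioi (N : ℝ)).indicator fun u ↦ ((Int.fract u : ℝ) : ℂ)

lemma norm_fractTail_le_one (N : ℕ) (u : ℝ) : ‖fractTail N u‖ ≤ 1 := by
  refine (norm_indicator_le_norm_self (fun u ↦ ((Int.fract u : ℝ) : ℂ)) u).trans ?_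
  rw [Complex.norm_real, norm_of_nonneg (Int.fract_nonneg u)]
  exact (Int.fract_lt_one u).le

lemma measurable_fractTail (N : ℕ) : Measurable (fractTail N) :=
  Measurable.indicator (Complex.measurable_ofReal.comp measurable_fract) measurableSet_Ioi

lemma mellin_indicator_Ioi {a : ℝ} (ha : 0 ≤ a) (f : ℝ → ℂ) (s : ℂ) :
    mellin ((Set.Ioi a).indicator f) s = ∫ u in Set.Ioi a, (u : ℂ) ^ (s - 1) * f u := by
  simp only [mellin, smul_eq_mul]
  simp_rw [← Set.indicator_mul_right (Set.Ioi a) (fun u : ℝ ↦ (u : ℂ) ^ (s - 1)) f]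
  rw [MeasureTheory.setIntegral_indicator measurableSet_Ioi,
    Set.inter_eq_right.mpr (Set.Ioi_subset_Ioi ha)]

lemma norm_mellin_fractTail_le {N : ℕ} (hN : 1 ≤ N) {s : ℂ} (hs : 0 < s.re) :
    ‖mellin (fractTail N) (-s)‖ ≤ (N : ℝ) ^ (-s.re) / s.re := by
  have hN₀ : (0 : ℝ) < N := by exact_mod_cast hN
  have hexp : -s.re - 1 < -1 := by linarith
  calc ‖mellin (fractTail N) (-s)‖
      = ‖∫ u in Set.Ioi (N : ℝ), (u : ℂ) ^ (-s - 1) * ((Int.fract u : ℝ) : ℂ)‖ := by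
        rw [fractTail, mellin_indicator_Ioi hN₀.le]
    _ ≤ ∫ u in Set.Ioi (N : ℝ), u ^ (-s.re - 1) := by
        refine MeasureTheory.norm_integral_le_of_norm_le
          (integrableOn_Ioi_rpow_of_lt hexp hN₀) ?_
        filter_upwards [MeasureTheory.ae_restrict_mem measurableSet_Ioi] with u hu
        have hu₀ : 0 < u := hN₀.trans hu
        rw [norm_mul, Complex.norm_cpow_eq_rpow_re_of_pos hu₀, Complex.norm_real,
          norm_of_nonneg (Int.fract_nonneg u)]
        simpa using mul_le_mul_of_nonneg_left (Int.fract_lt_one u).le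
          (rpow_nonneg hu₀.le (-s.re - 1))
    _ = (N : ℝ) ^ (-s.re) / s.re := by
        rw [integral_Ioi_rpow_of_lt hexp hN₀, sub_add_cancel, neg_div_neg_eq]

lemma differentiableAt_mellin_fractTail {N : ℕ} (hN : 1 ≤ N) {s : ℂ} (hs : 0 < s.re) :
    DifferentiableAt ℂ (fun z ↦ mellin (fractTail N) (-z)) s := by
  refine DifferentiableAt.comp s (f := fun z : ℂ ↦ -z) (g := mellin (fractTail N))
    (mellin_differentiableAt_of_isBigO_rpow (a := 0) (b := -s.re - 1) ?_ ?_ (by simpa using hs) ?_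
      (by simp)) differentiableAt_id.neg
  · refine ((MeasureTheory.locallyIntegrable_const (1 : ℝ)).mono
      (measurable_fractTail N).aestronglyMeasurable ?_).locallyIntegrableOn _
    exact .of_forall fun u ↦ by simpa using norm_fractTail_le_one N u
  · refine Asymptotics.IsBigO.of_bound 1 (.of_forall fun u ↦ ?_)
    simpa using norm_fractTail_le_one N u
  · refine Filter.EventuallyEq.trans_isBigO (f₂ := 0) ?_ (Asymptotics.isBigO_zero _ _)
    have hN₀ : (0 : ℝ) < N := by exact_mod_cast hN
    filter_upwards [Ioo_mem_nhdsGT hN₀] with u hu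
    exact Set.indicator_of_notMem (by simpa using hu.2.le) _

lemma LSeries_indicator_lt (N : ℕ) {s : ℂ} (hs : 1 < s.re) :
    LSeries (fun n ↦ if N < n then 1 else 0) s =
      riemannZeta s - ∑ n ∈ Icc 1 N, (n : ℂ) ^ (-s) := by
  have hzeta : HasSum (LSeries.term 1 s) (riemannZeta s) := by
    rw [← LSeries_one_eq_riemannZeta hs]
    exact (LSeriesSummable_one_iff.mpr hs).hasSum
  have hfin : HasSum (fun n ↦ if n ∈ Icc 1 N then (n : ℂ) ^ (-s) else 0)
      (∑ n ∈ Icc 1 N, (n : ℂ) ^ (-s)) := by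
    rw [← sum_congr rfl fun n hn ↦ if_pos hn]
    exact hasSum_sum_of_ne_finset_zero fun n hn ↦ if_neg hn
  rw [← (hzeta.sub hfin).tsum_eq]
  refine tsum_congr fun n ↦ ?_
  rcases eq_or_ne n 0 with rfl | hn
  · simp
  · have hn₁ : 1 ≤ n := Nat.one_le_iff_ne_zero.mpr hn
    rcases lt_or_ge N n with h | h
    · simp [LSeries.term_of_ne_zero hn, h, h.not_ge]
    · simp [LSeries.term_of_ne_zero hn, h, h.not_gt, hn₁, Complex.cpow_neg]

lemma sum_Icc_indicator_lt (N m : ℕ) :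
    ∑ n ∈ Icc 1 m, (if N < n then 1 else 0 : ℂ) = ((m - N : ℕ) : ℂ) := by
  rw [sum_boole]
  congr 1
  have hfilter : (Icc 1 m).filter (N < ·) = Ioc N m := by
    ext n
    simp only [mem_filter, mem_Icc, mem_Ioc]
    omega
  rw [hfilter, Nat.card_Ioc]

lemma natCast_floor_sub_of_lt {N : ℕ} {u : ℝ} (hu : N < u) :
    ((⌊u⌋₊ - N : ℕ) : ℂ) = u - N - (Int.fract u : ℝ) := by
  have hu₀ : 0 ≤ u := N.cast_nonneg.trans hu.le
  rw [Nat.cast_sub (Nat.le_floor hu.le), Int.fract, ← natCast_floor_eq_intCast_floor hu₀]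
  push_cast
  ring

lemma integrableOn_Ioi_cpow_mul_fract {a : ℝ} (ha : 0 < a) {s : ℂ} (hs : 0 < s.re) :
    MeasureTheory.IntegrableOn (fun u : ℝ ↦ (u : ℂ) ^ (-s - 1) * ((Int.fract u : ℝ) : ℂ))
      (Set.Ioi a) := by
  refine (integrableOn_Ioi_cpow_of_lt (by simpa [sub_eq_add_neg] using hs) ha).mul_bdd (c := 1)
    (Complex.measurable_ofReal.comp measurable_fract).aestronglyMeasurable (.of_forall fun u ↦ ?_)
  simpa [abs_of_nonneg (Int.fract_nonneg u)] using (Int.fract_lt_one u).le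

lemma integral_Ioi_floor_sub_mul_cpow {N : ℕ} (hN : 1 ≤ N) {s : ℂ} (hs : 1 < s.re) :
    ∫ u in Set.Ioi (1 : ℝ), ((⌊u⌋₊ - N : ℕ) : ℂ) * (u : ℂ) ^ (-(s + 1)) =
      (N : ℂ) ^ (1 - s) / (s - 1) - N * ((N : ℂ) ^ (-s) / s) - mellin (fractTail N) (-s) := by
  have hN₀ : (0 : ℝ) < N := by exact_mod_cast hN
  calc ∫ u in Set.Ioi (1 : ℝ), ((⌊u⌋₊ - N : ℕ) : ℂ) * (u : ℂ) ^ (-(s + 1))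
      = ∫ u in Set.Ioi (N : ℝ), ((⌊u⌋₊ - N : ℕ) : ℂ) * (u : ℂ) ^ (-(s + 1)) := by
        refine MeasureTheory.setIntegral_eq_of_subset_of_forall_sdiff_eq_zero measurableSet_Ioi
          (Set.Ioi_subset_Ioi (by exact_mod_cast hN)) fun u hu ↦ ?_
        rw [Nat.sub_eq_zero_of_le (Nat.floor_le_of_le (not_lt.mp hu.2)), Nat.cast_zero, zero_mul]
    _ = ∫ u in Set.Ioi (N : ℝ), ((u : ℂ) ^ (-s) - N * (u : ℂ) ^ (-s - 1)
          - (u : ℂ) ^ (-s - 1) * ((Int.fract u : ℝ) : ℂ)) := by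
        refine MeasureTheory.setIntegral_congr_fun measurableSet_Ioi fun u hu ↦ ?_
        have hu₀ : (u : ℂ) ≠ 0 := by exact_mod_cast (hN₀.trans hu).ne'
        simp only [natCast_floor_sub_of_lt hu, neg_add', Complex.cpow_sub _ _ hu₀, Complex.cpow_one]
        field_simp
    _ = (N : ℂ) ^ (1 - s) / (s - 1) - N * ((N : ℂ) ^ (-s) / s) - mellin (fractTail N) (-s) := by
        have hre : (-s).re < -1 := by simpa using hs
        have hre' : (-s - 1).re < -1 := by simpa [sub_eq_add_neg] using zero_lt_one.trans hs
        have hint := integrableOn_Ioi_cpow_of_lt hre hN₀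
        have hint' := (integrableOn_Ioi_cpow_of_lt hre' hN₀).const_mul (N : ℂ)
        rw [MeasureTheory.integral_sub (by exact hint.sub hint')
            (integrableOn_Ioi_cpow_mul_fract hN₀ (zero_lt_one.trans hs)),
          MeasureTheory.integral_sub hint hint', MeasureTheory.integral_const_mul,
          integral_Ioi_cpow_of_lt hre hN₀, integral_Ioi_cpow_of_lt hre' hN₀,
          fractTail, mellin_indicator_Ioi hN₀.le, sub_add_cancel, neg_div_neg_eq,
          neg_add_eq_sub, ← neg_sub s 1, neg_div_neg_eq, Complex.ofReal_natCast]

lemma riemannZeta_eq_of_one_lt_re {N : ℕ} (hN : 1 ≤ N) {s : ℂ} (hs : 1 < s.re) :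
    riemannZeta s = ∑ n ∈ Icc 1 N, (n : ℂ) ^ (-s) + (N : ℂ) ^ (1 - s) / (s - 1)
      - s * mellin (fractTail N) (-s) := by
  have hN₀ : (N : ℂ) ≠ 0 := by exact_mod_cast (Nat.one_le_iff_ne_zero.mp hN)
  have hs₀ : s ≠ 0 := fun h ↦ by norm_num [h] at hs
  have hs₁ : s - 1 ≠ 0 := fun h ↦ by simp [sub_eq_zero.mp h] at hs
  have htail : LSeries (fun n ↦ if N < n then 1 else 0) s =
      s * ∫ u in Set.Ioi (1 : ℝ), ((⌊u⌋₊ - N : ℕ) : ℂ) * (u : ℂ) ^ (-(s + 1)) := by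
    rw [LSeries_eq_mul_integral' _ zero_le_one hs]
    · simp only [sum_Icc_indicator_lt]
    · refine Asymptotics.IsBigO.of_bound 1 (.of_forall fun m ↦ ?_)
      have hterm : ∀ n ∈ Icc 1 m, ‖(if N < n then 1 else 0 : ℂ)‖ ≤ 1 := fun n _ ↦ by
        split_ifs <;> simp
      simpa [abs_of_nonneg, sum_nonneg] using sum_le_card_nsmul _ _ _ hterm
  rw [LSeries_indicator_lt N hs, integral_Ioi_floor_sub_mul_cpow hN hs] at htail
  rw [sub_eq_iff_eq_add.mp htail, sub_eq_add_neg 1 s, Complex.cpow_add _ _ hN₀, Complex.cpow_one]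
  field_simp
  ring

lemma riemannZeta₁_eq_of_re_pos {N : ℕ} (hN : 1 ≤ N) {s : ℂ} (hs : 0 < s.re) :
    riemannZeta₁ s = (s - 1) * (∑ n ∈ Icc 1 N, (n : ℂ) ^ (-s) - s * mellin (fractTail N) (-s))
      + (N : ℂ) ^ (1 - s) := by
  let U : Set ℂ := {z | 0 < z.re}
  have hU : IsOpen U := isOpen_lt continuous_const Complex.continuous_re
  have hUconn : IsPreconnected U := (convex_halfSpace_re_gt 0).isPreconnected
  have hN₀ : (N : ℂ) ≠ 0 := by exact_mod_cast (Nat.one_le_iff_ne_zero.mp hN)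
  let F (z : ℂ) : ℂ := (z - 1) * (∑ n ∈ Icc 1 N, (n : ℂ) ^ (-z) - z * mellin (fractTail N) (-z))
      + (N : ℂ) ^ (1 - z)
  have hF : DifferentiableOn ℂ F U := fun z hz ↦ by
    have hmellin := differentiableAt_mellin_fractTail hN hz
    have hsum : DifferentiableAt ℂ (fun z : ℂ ↦ ∑ n ∈ Icc 1 N, (n : ℂ) ^ (-z)) z :=
      DifferentiableAt.fun_sum fun n hn ↦ differentiableAt_id.neg.const_cpow <| .inl <| by
        exact_mod_cast (Nat.one_le_iff_ne_zero.mp (mem_Icc.mp hn).1)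
    have hpow : DifferentiableAt ℂ (fun z : ℂ ↦ (N : ℂ) ^ (1 - z)) z :=
      (differentiableAt_id.const_sub 1).const_cpow (.inl hN₀)
    exact (((differentiableAt_id.sub_const 1).mul
      (hsum.sub (differentiableAt_id.mul hmellin))).add hpow).differentiableWithinAt
  have hzeta := differentiable_riemannZeta₁.differentiableOn.analyticOnNhd hU
  refine hzeta.eqOn_of_preconnected_of_eventuallyEq (hF.analyticOnNhd hU) hUconn (z₀ := 2)
    (by simp [U]) ?_ hs
  filter_upwards [(isOpen_lt continuous_const Complex.continuous_re).mem_nhds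
    (show (1 : ℝ) < (2 : ℂ).re by simp)] with z hz
  have hz₁ : z - 1 ≠ 0 := fun h ↦ by simp [sub_eq_zero.mp h] at hz
  have hzeta := riemannZeta_eq_of_one_lt_re hN hz
  rw [riemannZeta_eq_inv_sub_mul (sub_ne_zero.mp hz₁), inv_mul_eq_iff_eq_mul₀ hz₁] at hzeta
  rw [hzeta]
  simp only [F]
  field_simp
  ring

lemma riemannZeta_eq_of_re_pos {N : ℕ} (hN : 1 ≤ N) {s : ℂ} (hs : 0 < s.re) (hs₁ : s ≠ 1) :
    riemannZeta s = ∑ n ∈ Icc 1 N, (n : ℂ) ^ (-s) + (N : ℂ) ^ (1 - s) / (s - 1)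
      - s * mellin (fractTail N) (-s) := by
  have hs₁' : s - 1 ≠ 0 := sub_ne_zero.mpr hs₁
  rw [riemannZeta_eq_inv_sub_mul hs₁, riemannZeta₁_eq_of_re_pos hN hs]
  field_simp
  ring

lemma sum_Icc_rpow_sub_one_le {δ : ℝ} (hδ : 0 < δ) (hδ₁ : δ ≤ 1) (N : ℕ) :
    ∑ n ∈ Icc 1 N, (n : ℝ) ^ (δ - 1) ≤ (N : ℝ) ^ δ / δ := by
  induction N with
  | zero => simp [zero_rpow hδ.ne']
  | succ n ih =>
    rw [sum_Icc_succ_top (by omega), Nat.cast_add_one]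
    have hn : (0 : ℝ) < n + 1 := by positivity
    have hstep : δ * ((n : ℝ) + 1) ^ (δ - 1) ≤ ((n : ℝ) + 1) ^ δ - (n : ℝ) ^ δ := by
      have hbernoulli := rpow_one_add_le_one_add_mul_self (s := -((n : ℝ) + 1)⁻¹)
        (neg_le_neg (inv_le_one_of_one_le₀ (by simp))) hδ.le hδ₁
      rw [show 1 + -((n : ℝ) + 1)⁻¹ = n / (n + 1) by field_simp; ring,
        div_rpow n.cast_nonneg hn.le, div_le_iff₀ (by positivity)] at hbernoulli
      rw [rpow_sub_one hn.ne', div_eq_mul_inv]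
      linarith
    rw [le_div_iff₀ hδ] at ih ⊢
    linarith

lemma norm_div_re_le {s : ℂ} (hs : 0 < s.re) : ‖s‖ / s.re ≤ 1 + |s.im| / s.re := by
  rw [div_le_iff₀ hs, add_mul, div_mul_cancel₀ _ hs.ne', one_mul]
  simpa [abs_of_pos hs] using Complex.norm_le_abs_re_add_abs_im s

lemma norm_mul_mellin_fractTail_floor_le {δ : ℝ} (hδ : 0 ≤ δ) (hδ₁ : δ < 1) {s : ℂ}
    (hs : 1 - δ ≤ s.re) (ht : 1 ≤ |s.im|) :
    ‖s * mellin (fractTail ⌊|s.im|⌋₊) (-s)‖ ≤ 4 / (1 - δ) * (⌊|s.im|⌋₊ : ℝ) ^ δ := by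
  have hδ₁' : 0 < 1 - δ := by linarith
  have hs₀ : 0 < s.re := hδ₁'.trans_le hs
  set t := |s.im|
  set N := ⌊t⌋₊
  have hN : 1 ≤ N := Nat.floor_pos.mpr ht
  have hN₁ : (1 : ℝ) ≤ N := by exact_mod_cast hN
  have htN : t ≤ 2 * N := by linarith [Nat.lt_floor_add_one t]
  have hnorm : ‖s‖ / s.re ≤ 4 * N / (1 - δ) := calc
    _ ≤ 1 + t / s.re := norm_div_re_le hs₀
    _ ≤ t / (1 - δ) + t / (1 - δ) := by
      gcongr
      rw [le_div_iff₀ hδ₁']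
      linarith
    _ = 2 * t / (1 - δ) := by ring
    _ ≤ 4 * N / (1 - δ) := by gcongr ?_ / _; linarith
  calc _ ≤ ‖s‖ * ((N : ℝ) ^ (-s.re) / s.re) := by
        rw [norm_mul]; gcongr; exact norm_mellin_fractTail_le hN hs₀
    _ = ‖s‖ / s.re * (N : ℝ) ^ (-s.re) := by ring
    _ ≤ 4 * N / (1 - δ) * (N : ℝ) ^ (δ - 1) := by
        refine mul_le_mul hnorm ?_ (by positivity) (by positivity)
        exact rpow_le_rpow_of_exponent_le hN₁ (by linarith)
    _ = 4 / (1 - δ) * (N : ℝ) ^ δ := by rw [rpow_sub_one (by positivity)]; field_simp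

lemma exists_norm_riemannZeta_le_rpow {δ : ℝ} (hδ : 0 < δ) (hδ₁ : δ < 1) :
    ∃ C > 0, ∀ s : ℂ, 1 - δ ≤ s.re → 1 ≤ |s.im| → ‖riemannZeta s‖ ≤ C * |s.im| ^ δ := by
  have hδ₁' : 0 < 1 - δ := by linarith
  refine ⟨1 / δ + 1 + 4 / (1 - δ), by positivity, fun s hs ht ↦ ?_⟩
  have htail := norm_mul_mellin_fractTail_floor_le hδ.le hδ₁ hs ht
  set t := |s.im|
  set N := ⌊t⌋₊
  have hs₀ : 0 < s.re := hδ₁'.trans_le hs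
  have hs₁ : s ≠ 1 := by rintro rfl; norm_num [t] at ht
  have hN : 1 ≤ N := Nat.floor_pos.mpr ht
  have hN₁ : (1 : ℝ) ≤ N := by exact_mod_cast hN
  have hNt : (N : ℝ) ^ δ ≤ t ^ δ := by gcongr; exact Nat.floor_le (by positivity)
  have hsum : ‖∑ n ∈ Icc 1 N, (n : ℂ) ^ (-s)‖ ≤ (N : ℝ) ^ δ / δ := calc
    _ ≤ ∑ n ∈ Icc 1 N, (n : ℝ) ^ (δ - 1) := norm_sum_le_of_le _ fun n hn ↦ by
      have hn₁ := (mem_Icc.mp hn).1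
      rw [Complex.norm_natCast_cpow_of_pos hn₁, Complex.neg_re]
      exact rpow_le_rpow_of_exponent_le (by exact_mod_cast hn₁) (by linarith)
    _ ≤ (N : ℝ) ^ δ / δ := sum_Icc_rpow_sub_one_le hδ hδ₁.le N
  have hpole : ‖(N : ℂ) ^ (1 - s) / (s - 1)‖ ≤ (N : ℝ) ^ δ := by
    have hdenom : 1 ≤ ‖s - 1‖ := ht.trans (by simpa using Complex.abs_im_le_norm (s - 1))
    rw [norm_div, Complex.norm_natCast_cpow_of_pos hN]
    refine (div_le_self (by positivity) hdenom).trans (rpow_le_rpow_of_exponent_le hN₁ ?_)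
    simp only [Complex.sub_re, Complex.one_re]
    linarith
  rw [riemannZeta_eq_of_re_pos hN hs₀ hs₁]
  calc _ ≤ (N : ℝ) ^ δ / δ + (N : ℝ) ^ δ + 4 / (1 - δ) * (N : ℝ) ^ δ :=
        (norm_sub_le _ _).trans (add_le_add ((norm_add_le _ _).trans (add_le_add hsum hpole)) htail)
    _ = (1 / δ + 1 + 4 / (1 - δ)) * (N : ℝ) ^ δ := by ring
    _ ≤ _ := by gcongr

lemma sub_le_re_of_mem_closedBall {s z : ℂ} {r : ℝ} (hz : z ∈ Metric.closedBall s r) :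
    s.re - r ≤ z.re := by
  have := (abs_le.mp ((Complex.abs_re_le_norm (z - s)).trans (mem_closedBall_iff_norm.mp hz))).1
  simp only [Complex.sub_re] at this
  linarith

lemma abs_im_mem_Icc_of_mem_closedBall {s z : ℂ} {r : ℝ} (hr : r ≤ 1) (hs : 2 ≤ |s.im|)
    (hz : z ∈ Metric.closedBall s r) : |z.im| ∈ Set.Icc (|s.im| / 2) (2 * |s.im|) := by
  have him := abs_le.mp ((abs_abs_sub_abs_le_abs_sub z.im s.im).trans
    ((Complex.abs_im_le_norm (z - s)).trans (mem_closedBall_iff_norm.mp hz)))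
  constructor <;> linarith

lemma exists_norm_deriv_riemannZeta_le_rpow {δ : ℝ} (hδ : 0 < δ) (hδ₁ : δ < 1) :
    ∃ C > 0, ∀ s : ℂ, 1 - δ / 2 ≤ s.re → 2 ≤ |s.im| →
      ‖deriv riemannZeta s‖ ≤ C * |s.im| ^ δ := by
  obtain ⟨C, hC, hzeta⟩ := exists_norm_riemannZeta_le_rpow hδ hδ₁
  refine ⟨C * 2 ^ δ / (δ / 2), by positivity, fun s hs ht ↦ ?_⟩
  have him {z : ℂ} (hz : z ∈ Metric.closedBall s (δ / 2)) :=
    abs_im_mem_Icc_of_mem_closedBall (by linarith) ht hz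
  have hdiff : DifferentiableOn ℂ riemannZeta (Metric.closedBall s (δ / 2)) := fun z hz ↦ by
    refine (differentiableAt_riemannZeta ?_).differentiableWithinAt
    rintro rfl
    have := (him hz).1
    norm_num at this
    linarith
  have hbound : ∀ z ∈ Metric.sphere s (δ / 2), ‖riemannZeta z‖ ≤ C * (2 * |s.im|) ^ δ := by
    intro z hz
    have hz := Metric.sphere_subset_closedBall hz
    refine (hzeta z ?_ (by linarith [(him hz).1])).trans ?_
    · linarith [sub_le_re_of_mem_closedBall hz]
    · gcongr
      exact (him hz).2
  refine (Complex.norm_deriv_le_of_forall_mem_sphere_norm_le (by positivity)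
    (hdiff.diffContOnCl_ball subset_rfl) hbound).trans_eq ?_
  rw [mul_rpow two_pos.le (abs_nonneg _)]
  ring

/-! ### Lower bounds for `ζ` near the line `Re s = 1` -/

lemma one_le_norm_riemannZeta_pow_mul {s : ℂ} (hs : 1 < s.re) :
    1 ≤ ‖riemannZeta s.re‖ ^ 3 * ‖riemannZeta s‖ ^ 4 *
      ‖riemannZeta (s.re + 2 * s.im * Complex.I)‖ := by
  have h := DirichletCharacter.norm_LFunction_product_ge_one (1 : DirichletCharacter ℂ 1)
    (sub_pos.mpr hs) s.im
  have hre : (1 : ℂ) + (s.re - 1 : ℝ) = s.re := by push_cast; ring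
  rw [DirichletCharacter.LFunctionTrivChar, hre, mul_comm Complex.I, Complex.re_add_im,
    mul_assoc 2, mul_comm Complex.I, ← mul_assoc 2] at h
  simpa [DirichletCharacter.LFunction_modOne_eq] using h

lemma exists_norm_riemannZeta_ofReal_le (b : ℝ) :
    ∃ C > 0, ∀ σ : ℝ, 1 < σ → σ ≤ b → ‖riemannZeta σ‖ ≤ C / (σ - 1) := by
  obtain ⟨C, hC⟩ := (isCompact_Icc (a := (1 : ℝ)) (b := b)).exists_bound_of_continuousOn
    (differentiable_riemannZeta₁.continuous.comp Complex.continuous_ofReal).continuousOn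
  refine ⟨max C 1, by positivity, fun σ hσ hσb ↦ ?_⟩
  have hσ₁ : (σ : ℂ) ≠ 1 := by exact_mod_cast hσ.ne'
  have hnorm : ‖(σ : ℂ) - 1‖ = σ - 1 := by
    rw [← Complex.ofReal_one, ← Complex.ofReal_sub, Complex.norm_of_nonneg (by linarith)]
  rw [riemannZeta_eq_inv_sub_mul hσ₁, norm_mul, norm_inv, hnorm, inv_mul_eq_div]
  gcongr
  exact (hC σ ⟨hσ.le, hσb⟩).trans (le_max_left C 1)

lemma exists_pow_three_le_norm_riemannZeta_pow_four_mul {δ : ℝ} (hδ : 0 < δ) (hδ₁ : δ < 1) :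
    ∃ c > 0, ∀ s : ℂ, 1 < s.re → s.re ≤ 3 → 1 ≤ |s.im| →
      c * (s.re - 1) ^ 3 ≤ ‖riemannZeta s‖ ^ 4 * |s.im| ^ δ := by
  obtain ⟨C, hC, hgrowth⟩ := exists_norm_riemannZeta_le_rpow hδ hδ₁
  obtain ⟨B, hB, hpole⟩ := exists_norm_riemannZeta_ofReal_le 3
  refine ⟨(B ^ 3 * (C * 2 ^ δ))⁻¹, by positivity, fun s hs hs₃ ht ↦ ?_⟩
  have hs₁ : 0 < s.re - 1 := sub_pos.mpr hs
  have hdouble : ‖riemannZeta (s.re + 2 * s.im * Complex.I)‖ ≤ C * (2 * |s.im|) ^ δ := by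
    simpa [abs_mul] using hgrowth (s.re + 2 * s.im * Complex.I) (by simp; linarith)
      (by simp [abs_mul]; linarith)
  have hprod : 1 ≤ (B / (s.re - 1)) ^ 3 * ‖riemannZeta s‖ ^ 4 * (C * (2 * |s.im|) ^ δ) := by
    refine (one_le_norm_riemannZeta_pow_mul hs).trans ?_
    gcongr
    exact hpole s.re hs hs₃
  rw [inv_mul_le_iff₀ (by positivity)]
  calc (s.re - 1) ^ 3
      ≤ (s.re - 1) ^ 3 *
          ((B / (s.re - 1)) ^ 3 * ‖riemannZeta s‖ ^ 4 * (C * (2 * |s.im|) ^ δ)) :=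
        le_mul_of_one_le_right (by positivity) hprod
    _ = B ^ 3 * (C * 2 ^ δ) * (‖riemannZeta s‖ ^ 4 * |s.im| ^ δ) := by
        rw [mul_rpow two_pos.le (abs_nonneg _)]
        field_simp

lemma exists_norm_riemannZeta_sub_le {δ : ℝ} (hδ : 0 < δ) (hδ₁ : δ < 1) :
    ∃ C > 0, ∀ s w : ℂ, 1 - δ / 2 ≤ s.re → 1 - δ / 2 ≤ w.re → w.im = s.im → 2 ≤ |s.im| →
      ‖riemannZeta w - riemannZeta s‖ ≤ C * |s.im| ^ δ * |w.re - s.re| := by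
  obtain ⟨C, hC, hderiv⟩ := exists_norm_deriv_riemannZeta_le_rpow hδ hδ₁
  refine ⟨C, hC, fun s w hs hw him ht ↦ ?_⟩
  let ray : Set ℂ := {z | 1 - δ / 2 ≤ z.re} ∩ {z | z.im = s.im}
  have hray : Convex ℝ ray := (convex_halfSpace_re_ge _).inter
    (convex_hyperplane Complex.imLm.isLinear _)
  have hnorm : ‖w - s‖ = |w.re - s.re| := by
    rw [← Complex.sub_re, eq_comm, Complex.abs_re_eq_norm, Complex.sub_im, him, sub_self]
  rw [← hnorm]
  refine hray.norm_image_sub_le_of_norm_deriv_le (fun z hz ↦ ?_) (fun z hz ↦ ?_)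
    ⟨hs, rfl⟩ ⟨hw, him⟩
  · refine differentiableAt_riemannZeta ?_
    rintro rfl
    have him₁ : (1 : ℂ).im = s.im := hz.2
    norm_num [← him₁] at ht
  · rw [← hz.2]
    exact hderiv z hz.1 (hz.2 ▸ ht)

lemma exists_le_norm_riemannZeta_of_one_add_le_re {η : ℝ} (hη : 0 < η) (hη₁ : η < 1) :
    ∃ d > 0, ∀ e > 0, ∀ s : ℂ, 1 ≤ |s.im| → 1 + e ^ 4 * (|s.im| ^ (-η)) ^ 5 ≤ s.re → s.re ≤ 3 →
      d * e ^ 3 * (|s.im| ^ (-η)) ^ 4 ≤ ‖riemannZeta s‖ := by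
  obtain ⟨c, hc, hright⟩ := exists_pow_three_le_norm_riemannZeta_pow_four_mul hη hη₁
  obtain ⟨d, hd, rfl⟩ : ∃ d > 0, c = d ^ 4 := ⟨c ^ (1 / 4 : ℝ), by positivity, by
    rw [← rpow_natCast, ← rpow_mul hc.le]; norm_num⟩
  refine ⟨d, hd, fun e he s ht hs hs₃ ↦ ?_⟩
  have ht₀ : 0 < |s.im| := by linarith
  set τ := |s.im| ^ (-η) with hτ
  have hτ₀ : 0 < τ := rpow_pos_of_pos ht₀ _
  have hx : 0 < e ^ 4 * τ ^ 5 := by positivity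
  have h := hright s (by linarith) hs₃ ht
  rw [show |s.im| ^ η = τ⁻¹ by rw [hτ, rpow_neg ht₀.le, inv_inv], ← div_eq_mul_inv,
    le_div_iff₀ hτ₀] at h
  refine le_of_pow_le_pow_left₀ four_ne_zero (norm_nonneg _) (le_trans ?_ h)
  calc (d * e ^ 3 * τ ^ 4) ^ 4 = d ^ 4 * (e ^ 4 * τ ^ 5) ^ 3 * τ := by ring
    _ ≤ d ^ 4 * (s.re - 1) ^ 3 * τ := by gcongr; linarith

lemma exists_le_norm_riemannZeta_of_one_sub_le_re {η : ℝ} (hη : 0 < η) (hη₁ : η < 1) :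
    ∃ a > 0, ∃ c > 0, ∀ s : ℂ, 2 ≤ |s.im| → 1 - a * (|s.im| ^ (-η)) ^ 5 ≤ s.re → s.re ≤ 3 →
      c * (|s.im| ^ (-η)) ^ 4 ≤ ‖riemannZeta s‖ := by
  obtain ⟨d, hd, hright⟩ := exists_le_norm_riemannZeta_of_one_add_le_re hη hη₁
  obtain ⟨D, hD, hvar⟩ := exists_norm_riemannZeta_sub_le hη hη₁
  -- At `Re s = 1 + e⁴τ⁵` the lower bound is `d e³τ⁴`, while `ζ` varies by at most `2D e⁴τ⁴` over
  -- `|Re s - 1| ≤ e⁴τ⁵`: a small `e` wins.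
  obtain ⟨e, he, heη, heD⟩ : ∃ e > 0, e ^ 4 ≤ η / 2 ∧ 4 * D * e ≤ d := by
    refine ⟨min (η / 2) (d / (4 * D)), by positivity, ?_, ?_⟩
    · refine (pow_le_of_le_one (by positivity) ?_ four_ne_zero).trans (min_le_left _ _)
      exact (min_le_left _ _).trans (by linarith)
    · rw [← le_div_iff₀' (by positivity)]
      exact min_le_right _ _
  refine ⟨e ^ 4, by positivity, d * e ^ 3 / 2, by positivity, fun s ht hs hs₃ ↦ ?_⟩
  have ht₀ : 0 < |s.im| := by linarith
  have hright := hright e he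
  set τ := |s.im| ^ (-η) with hτ
  have hτ₀ : 0 < τ := rpow_pos_of_pos ht₀ _
  have hτ₁ : τ ≤ 1 := rpow_le_one_of_one_le_of_nonpos (by linarith) (by linarith)
  set x := e ^ 4 * τ ^ 5 with hx
  have hx₀ : 0 < x := by positivity
  have hxη : x ≤ η / 2 :=
    (mul_le_of_le_one_right (by positivity) (pow_le_one₀ hτ₀.le hτ₁)).trans heη
  rcases le_or_gt (1 + x) s.re with hs' | hs'
  · refine le_trans ?_ (hright s (by linarith) hs' hs₃)
    gcongr
    linarith [show 0 < d * e ^ 3 by positivity]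
  · let w : ℂ := ⟨1 + x, s.im⟩
    have hw : d * e ^ 3 * τ ^ 4 ≤ ‖riemannZeta w‖ :=
      hright w (by linarith) le_rfl (show 1 + x ≤ 3 by linarith)
    have hsw : ‖riemannZeta w - riemannZeta s‖ ≤ d * e ^ 3 / 2 * τ ^ 4 := calc
      _ ≤ D * |s.im| ^ η * |1 + x - s.re| :=
        hvar s w (by linarith) (show 1 - η / 2 ≤ 1 + x by linarith) rfl ht
      _ ≤ D * τ⁻¹ * (2 * x) := by
        rw [hτ, rpow_neg ht₀.le, inv_inv, abs_of_pos (show 0 < 1 + x - s.re by linarith)]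
        gcongr
        linarith
      _ = 4 * D * e * e ^ 3 / 2 * τ ^ 4 := by rw [hx]; field_simp; norm_num
      _ ≤ _ := by gcongr
    linarith [norm_sub_norm_le (riemannZeta w) (riemannZeta s)]

lemma exists_le_norm_riemannZeta {δ : ℝ} (hδ : 0 < δ) (hδ₁ : δ < 1) :
    ∃ c > 0, ∀ s : ℂ, 2 ≤ |s.im| → 1 - c * |s.im| ^ (-δ) ≤ s.re → s.re ≤ 3 →
      c * |s.im| ^ (-δ) ≤ ‖riemannZeta s‖ := by
  obtain ⟨a, ha, c, hc, hzeta⟩ :=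
    exists_le_norm_riemannZeta_of_one_sub_le_re (η := δ / 5) (by positivity) (by linarith)
  refine ⟨min a c, by positivity, fun s ht hs hs₃ ↦ ?_⟩
  have ht₀ : 0 < |s.im| := by linarith
  have hpow : |s.im| ^ (-δ) = (|s.im| ^ (-(δ / 5))) ^ 5 := by
    rw [← rpow_mul_natCast ht₀.le]
    congr 1
    push_cast
    ring
  have hzeta := hzeta s ht
  rw [hpow] at hs ⊢
  set τ := |s.im| ^ (-(δ / 5))
  have hτ₀ : 0 < τ := rpow_pos_of_pos ht₀ _
  have hτ₁ : τ ≤ 1 := rpow_le_one_of_one_le_of_nonpos (by linarith) (by linarith)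
  calc min a c * τ ^ 5 ≤ c * τ ^ 4 := mul_le_mul (min_le_right _ _)
        (pow_le_pow_of_le_one hτ₀.le hτ₁ (by norm_num)) (by positivity) hc.le
    _ ≤ ‖riemannZeta s‖ := hzeta (le_trans (by gcongr; exact min_le_left _ _) hs) hs₃

/-- `1 / (s (s + 1) ζ(s))`, with the removable singularity at `s = 1` filled in: the Dirichlet
series of `μ` times the Mellin transform of the Cesàro weight `(1 - t)₊`. -/
noncomputable def invZetaKernel (s : ℂ) : ℂ := (s - 1) / (s * (s + 1) * riemannZeta₁ s)

lemma invZetaKernel_of_ne_one {s : ℂ} (hs : s ≠ 1) :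
    invZetaKernel s = (s * (s + 1))⁻¹ * (riemannZeta s)⁻¹ := by
  rw [invZetaKernel, riemannZeta_eq_inv_sub_mul hs, div_eq_mul_inv, mul_inv _ (riemannZeta₁ s),
    mul_inv _ (riemannZeta₁ s), inv_inv]
  ring

lemma riemannZeta₁_ne_zero_of_one_le_re {s : ℂ} (hs : 1 ≤ s.re) : riemannZeta₁ s ≠ 0 := by
  rcases eq_or_ne s 1 with rfl | hs₁
  · simp
  · have := riemannZeta_ne_zero_of_one_le_re hs
    rw [riemannZeta_eq_inv_sub_mul hs₁] at this
    exact right_ne_zero_of_mul this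

lemma analyticAt_invZetaKernel {s : ℂ} (hs : 0 < s.re) (hzeta : riemannZeta₁ s ≠ 0) :
    AnalyticAt ℂ invZetaKernel s := by
  have hs₀ : s ≠ 0 := by rintro rfl; simp at hs
  have hs₁ : s + 1 ≠ 0 := fun h ↦ by
    linarith [show s.re + 1 = 0 by simpa using congrArg Complex.re h]
  exact (analyticAt_id.sub analyticAt_const).div
    ((analyticAt_id.mul (analyticAt_id.add analyticAt_const)).mul
      (differentiable_riemannZeta₁.analyticAt s)) (by simp [hs₀, hs₁, hzeta])

lemma norm_invZetaKernel_le {s : ℂ} (hs : s.im ≠ 0) :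
    ‖invZetaKernel s‖ ≤ (|s.im| ^ 2)⁻¹ * ‖riemannZeta s‖⁻¹ := by
  have him : |s.im| ^ 2 ≤ ‖s * (s + 1)‖ := by
    rw [norm_mul, sq]
    gcongr
    · exact Complex.abs_im_le_norm s
    · simpa using Complex.abs_im_le_norm (s + 1)
  rw [invZetaKernel_of_ne_one (by rintro rfl; simp at hs), norm_mul, norm_inv, norm_inv]
  gcongr

lemma exists_le_norm_riemannZeta_of_mem_closedBall {δ : ℝ} (hδ : 0 < δ) (hδ₁ : δ < 1) :
    ∃ ρ > 0, ∃ c > 0, ∀ s : ℂ, 1 ≤ s.re → s.re ≤ 2 → 4 ≤ |s.im| →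
      ∀ z ∈ Metric.closedBall s (ρ * |s.im| ^ (-δ)),
        0 < z.re ∧ |s.im| / 2 ≤ |z.im| ∧ c * |s.im| ^ (-δ) ≤ ‖riemannZeta z‖ := by
  obtain ⟨c, hc, hzeta⟩ := exists_le_norm_riemannZeta hδ hδ₁
  refine ⟨min (c / 2 ^ δ) (1 / 2), by positivity, c / 2 ^ δ, by positivity,
    fun s hs hs₂ ht z hz ↦ ?_⟩
  have ht₀ : 0 < |s.im| := by linarith
  have hpow₁ : |s.im| ^ (-δ) ≤ 1 := rpow_le_one_of_one_le_of_nonpos (by linarith) (by linarith)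
  have hr : min (c / 2 ^ δ) (1 / 2) * |s.im| ^ (-δ) ≤ 1 / 2 :=
    (mul_le_of_le_one_right (by positivity) hpow₁).trans (min_le_right _ _)
  have hr' : min (c / 2 ^ δ) (1 / 2) * |s.im| ^ (-δ) ≤ c / 2 ^ δ * |s.im| ^ (-δ) := by
    gcongr
    exact min_le_left _ _
  obtain ⟨him, him'⟩ := abs_im_mem_Icc_of_mem_closedBall (by linarith) (by linarith) hz
  have hpow : c / 2 ^ δ * |s.im| ^ (-δ) ≤ c * |z.im| ^ (-δ) := by
    rw [div_mul_eq_mul_div, mul_div_assoc, div_eq_inv_mul, ← rpow_neg two_pos.le,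
      ← mul_rpow two_pos.le ht₀.le]
    gcongr ?_ * ?_
    exact rpow_le_rpow_of_nonpos (by linarith) him' (by linarith)
  have hre := sub_le_re_of_mem_closedBall hz
  have hre' := sub_le_re_of_mem_closedBall (Metric.mem_closedBall_comm.mp hz)
  exact ⟨by linarith, him, hpow.trans (hzeta z (by linarith) (by linarith) (by linarith))⟩

lemma exists_norm_invZetaKernel_le_of_mem_closedBall {δ : ℝ} (hδ : 0 < δ) (hδ₁ : δ < 1) :
    ∃ ρ > 0, ∃ C > 0, ∀ s : ℂ, 1 ≤ s.re → s.re ≤ 2 → 4 ≤ |s.im| →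
      ∀ z ∈ Metric.closedBall s (ρ * |s.im| ^ (-δ)),
        AnalyticAt ℂ invZetaKernel z ∧ ‖invZetaKernel z‖ ≤ C * |s.im| ^ (δ - 2) := by
  obtain ⟨ρ, hρ, c, hc, hball⟩ := exists_le_norm_riemannZeta_of_mem_closedBall hδ hδ₁
  refine ⟨ρ, hρ, 4 / c, by positivity, fun s hs hs₂ ht z hz ↦ ?_⟩
  have ht₀ : 0 < |s.im| := by linarith
  obtain ⟨hre, him, hlower⟩ := hball s hs hs₂ ht z hz
  have hzeta : riemannZeta z ≠ 0 := norm_pos_iff.mp (lt_of_lt_of_le (by positivity) hlower)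
  have him₀ : z.im ≠ 0 := abs_pos.mp (by linarith)
  constructor
  · refine analyticAt_invZetaKernel hre fun h ↦ hzeta ?_
    rw [riemannZeta_eq_inv_sub_mul (by rintro rfl; simp at him₀), h, mul_zero]
  · calc ‖invZetaKernel z‖ ≤ (|z.im| ^ 2)⁻¹ * ‖riemannZeta z‖⁻¹ := norm_invZetaKernel_le him₀
      _ ≤ ((|s.im| / 2) ^ 2)⁻¹ * (c * |s.im| ^ (-δ))⁻¹ := by gcongr
      _ = 4 / c * |s.im| ^ (δ - 2) := by
        rw [rpow_sub ht₀, rpow_neg ht₀.le, rpow_two]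
        field_simp
        norm_num

lemma exists_norm_iteratedDeriv_invZetaKernel_le_abs_im_rpow (k : ℕ) :
    ∃ C > 0, ∀ s : ℂ, 1 ≤ s.re → s.re ≤ 2 → 4 ≤ |s.im| →
      ‖iteratedDeriv k invZetaKernel s‖ ≤ C * |s.im| ^ (-(3 / 2) : ℝ) := by
  obtain ⟨δ, hδ, hδ₁, hδk⟩ : ∃ δ : ℝ, 0 < δ ∧ δ < 1 ∧ δ * (k + 1) = 1 / 2 := by
    refine ⟨1 / 2 / (k + 1), by positivity, ?_, by field_simp⟩
    rw [div_lt_one (by positivity)]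
    linarith [(k.cast_nonneg : (0 : ℝ) ≤ k)]
  obtain ⟨ρ, hρ, C, hC, hball⟩ := exists_norm_invZetaKernel_le_of_mem_closedBall hδ hδ₁
  refine ⟨k.factorial * C / ρ ^ k, by positivity, fun s hs hs₂ ht ↦ ?_⟩
  have ht₀ : 0 < |s.im| := by linarith
  have hdiff : DifferentiableOn ℂ invZetaKernel (Metric.closedBall s (ρ * |s.im| ^ (-δ))) :=
    fun z hz ↦ (hball s hs hs₂ ht z hz).1.differentiableAt.differentiableWithinAt
  have hcauchy := Complex.norm_iteratedDeriv_le_of_forall_mem_sphere_norm_le k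
    (show 0 < ρ * |s.im| ^ (-δ) by positivity) (hdiff.diffContOnCl_ball subset_rfl)
    fun z hz ↦ (hball s hs hs₂ ht z (Metric.sphere_subset_closedBall hz)).2
  calc _ ≤ k.factorial * (C * |s.im| ^ (δ - 2)) / (ρ * |s.im| ^ (-δ)) ^ k := hcauchy
    _ = k.factorial * C / ρ ^ k * (|s.im| ^ (δ - 2) / |s.im| ^ (-δ * k)) := by
      rw [mul_pow, ← rpow_mul_natCast ht₀.le]
      field_simp
    _ = k.factorial * C / ρ ^ k * |s.im| ^ (-(3 / 2) : ℝ) := by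
      rw [← rpow_sub ht₀]
      congr 2
      linear_combination hδk

lemma exists_norm_iteratedDeriv_invZetaKernel_le (k : ℕ) :
    ∃ C, ∀ s : ℂ, 1 ≤ s.re → s.re ≤ 2 →
      ‖iteratedDeriv k invZetaKernel s‖ ≤ C * (1 + |s.im|) ^ (-(3 / 2) : ℝ) := by
  obtain ⟨C, hC, hlarge⟩ := exists_norm_iteratedDeriv_invZetaKernel_le_abs_im_rpow k
  have hcont : ContinuousOn (iteratedDeriv k invZetaKernel)
      (Set.Icc (1 : ℝ) 2 ×ℂ Set.Icc (-4 : ℝ) 4) := fun s hs ↦ by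
    rw [iteratedDeriv_eq_iterate]
    exact ((analyticAt_invZetaKernel (zero_lt_one.trans_le hs.1.1)
      (riemannZeta₁_ne_zero_of_one_le_re hs.1.1)).iterated_deriv k).continuousAt.continuousWithinAt
  obtain ⟨B, hB⟩ := (isCompact_Icc.reProdIm isCompact_Icc).exists_bound_of_continuousOn hcont
  refine ⟨max (C * 2 ^ (3 / 2 : ℝ)) (max B 0 * 5 ^ (3 / 2 : ℝ)), fun s hs hs₂ ↦ ?_⟩
  have ht : 0 < 1 + |s.im| := by positivity
  have hscale {a : ℝ} (ha : 0 < a) :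
      ((1 + |s.im|) / a) ^ (-(3 / 2) : ℝ) = a ^ (3 / 2 : ℝ) * (1 + |s.im|) ^ (-(3 / 2) : ℝ) := by
    rw [div_rpow ht.le ha.le, rpow_neg ha.le, div_inv_eq_mul, mul_comm]
  rcases le_total 4 |s.im| with h | h
  · calc _ ≤ C * |s.im| ^ (-(3 / 2) : ℝ) := hlarge s hs hs₂ h
      _ ≤ C * ((1 + |s.im|) / 2) ^ (-(3 / 2) : ℝ) := by
        gcongr ?_ * ?_
        exact rpow_le_rpow_of_nonpos (by positivity) (by linarith) (by norm_num)
      _ ≤ _ := by rw [hscale two_pos, ← mul_assoc]; gcongr; exact le_max_left _ _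
  · calc _ ≤ max B 0 * 1 := by
          rw [mul_one]
          exact (hB s ⟨⟨hs, hs₂⟩, abs_le.mp h⟩).trans (le_max_left _ _)
      _ ≤ max B 0 * ((1 + |s.im|) / 5) ^ (-(3 / 2) : ℝ) := by
        gcongr
        exact one_le_rpow_of_pos_of_le_one_of_nonpos (by positivity) (by linarith) (by norm_num)
      _ ≤ _ := by rw [hscale (by norm_num), ← mul_assoc]; gcongr; exact le_max_right _ _

/-! ### Perron's formula with the weight `(1 - n / x)₊` -/

lemma hasMellin_indicator_one_sub {s : ℂ} (hs : 0 < s.re) :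
    HasMellin ((Set.Ioc (0 : ℝ) 1).indicator fun t ↦ (1 - t : ℂ)) s (s * (s + 1))⁻¹ := by
  have hone := hasMellin_one_Ioc hs
  have hid := hasMellin_cpow_Ioc 1 (s := s) (by simpa using by linarith)
  have hs₀ : s ≠ 0 := by rintro rfl; simp at hs
  have hs₁ : s + 1 ≠ 0 := fun h ↦ by
    linarith [show s.re + 1 = 0 by simpa using congrArg Complex.re h]
  have hdiff := hasMellin_sub hone.1 hid.1
  rw [hone.2, hid.2, div_sub_div _ _ hs₀ hs₁, one_mul, mul_one, add_sub_cancel_left, one_div]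
    at hdiff
  have hfun : ((Set.Ioc (0 : ℝ) 1).indicator fun t ↦ (1 - t : ℂ)) = fun t ↦
      (Set.Ioc (0 : ℝ) 1).indicator (fun _ ↦ 1) t -
        (Set.Ioc (0 : ℝ) 1).indicator (fun t ↦ (t : ℂ) ^ (1 : ℂ)) t := by
    funext t
    by_cases ht : t ∈ Set.Ioc (0 : ℝ) 1 <;> simp [ht]
  rw [hfun]
  exact hdiff

lemma norm_inv_mul_add_one_le {s : ℂ} (hs : 1 ≤ s.re) : ‖(s * (s + 1))⁻¹‖ ≤ (1 + s.im ^ 2)⁻¹ := by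
  have hnorm : ‖s‖ ≤ ‖s + 1‖ := by
    rw [← sq_le_sq₀ (norm_nonneg _) (norm_nonneg _), Complex.sq_norm, Complex.sq_norm,
      Complex.normSq_apply, Complex.normSq_apply]
    simp only [Complex.add_re, Complex.add_im, Complex.one_re, Complex.one_im]
    linarith
  rw [norm_inv, norm_mul]
  gcongr
  calc 1 + s.im ^ 2 ≤ s.re ^ 2 + s.im ^ 2 := by gcongr; exact one_le_pow₀ hs
    _ = ‖s‖ * ‖s‖ := by rw [← sq, Complex.sq_norm, Complex.normSq_apply]; ring
    _ ≤ ‖s‖ * ‖s + 1‖ := by gcongr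

lemma verticalIntegrable_inv_mul_add_one {σ : ℝ} (hσ : 1 ≤ σ) :
    Complex.VerticalIntegrable (fun s ↦ (s * (s + 1))⁻¹) σ := by
  refine integrable_inv_one_add_sq.mono' (by fun_prop) (.of_forall fun y ↦ ?_)
  simpa using norm_inv_mul_add_one_le (s := σ + y * Complex.I) (by simpa using hσ)

lemma integral_cpow_mul_inv_mul_add_one {σ u : ℝ} (hσ : 1 ≤ σ) (hu : 0 < u) :
    ∫ y : ℝ, (u : ℂ) ^ (-(σ + y * Complex.I)) *
        ((σ + y * Complex.I) * (σ + y * Complex.I + 1))⁻¹ =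
      2 * π * (max (1 - u) 0 : ℝ) := by
  let w : ℝ → ℂ := (Set.Ioc (0 : ℝ) 1).indicator fun t ↦ (1 - t : ℂ)
  have hw {t : ℝ} (ht : 0 < t) : w t = (max (1 - t) 0 : ℝ) := by
    rcases le_or_gt t 1 with h | h
    · simp [w, ht, h]
    · simp [w, h.not_ge, max_eq_right (sub_nonpos.mpr h.le)]
  have hw_cont : ContinuousAt w u :=
    (by fun_prop : ContinuousAt (fun t : ℝ ↦ ((max (1 - t) 0 : ℝ) : ℂ)) u).congr <| by
      filter_upwards [lt_mem_nhds hu] with t ht using (hw ht).symm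
  have hmellin (y : ℝ) : HasMellin w (σ + y * Complex.I) _ :=
    hasMellin_indicator_one_sub (by simpa using zero_lt_one.trans_le hσ)
  have hvert : Complex.VerticalIntegrable (mellin w) σ :=
    (verticalIntegrable_inv_mul_add_one hσ).congr (.of_forall fun y ↦ (hmellin y).2.symm)
  have hinv := mellinInv_mellin_eq σ w hu (by simpa using (hmellin 0).1) hvert hw_cont
  rw [mellinInv, hw hu] at hinv
  simp only [(hmellin _).2, smul_eq_mul] at hinv
  rw [← hinv, Complex.real_smul, ← mul_assoc, Complex.ofReal_div, Complex.ofReal_mul,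
    Complex.ofReal_one, Complex.ofReal_ofNat, mul_one_div_cancel (by simp [pi_ne_zero]), one_mul]

lemma ofReal_div_cpow_neg {a b : ℝ} (ha : 0 ≤ a) (hb : 0 < b) (s : ℂ) :
    ((a / b : ℝ) : ℂ) ^ (-s) = (b : ℂ) ^ s / (a : ℂ) ^ s := by
  have hb_arg : (b : ℂ).arg ≠ π := by
    rw [Complex.arg_ofReal_of_nonneg hb.le]
    exact pi_ne_zero.symm
  rw [Complex.cpow_neg, div_eq_mul_inv, Complex.ofReal_mul,
    Complex.mul_cpow_ofReal_nonneg ha (inv_nonneg.mpr hb.le), Complex.ofReal_inv,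
    Complex.inv_cpow _ _ hb_arg, mul_inv, inv_inv, mul_comm, div_eq_mul_inv]

/-- The contribution of `f n` to the Perron integrand `x ^ s / (s (s + 1)) * L(f, s)` at
`s = σ + iy`. -/
noncomputable def perronTerm (f : ℕ → ℂ) (x σ : ℝ) (n : ℕ) (y : ℝ) : ℂ :=
  (x : ℂ) ^ (σ + y * Complex.I) *
    (((σ + y * Complex.I) * (σ + y * Complex.I + 1))⁻¹ * LSeries.term f (σ + y * Complex.I) n)

lemma norm_perronTerm (f : ℕ → ℂ) {x : ℝ} (hx : 0 < x) (σ : ℝ) (n : ℕ) (y : ℝ) :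
    ‖perronTerm f x σ n y‖ = x ^ σ * ‖LSeries.term f σ n‖ *
      ‖((σ + y * Complex.I) * (σ + y * Complex.I + 1))⁻¹‖ := by
  simp only [perronTerm, norm_mul, LSeries.norm_term_eq, Complex.norm_cpow_eq_rpow_re_of_pos hx]
  simp only [Complex.add_re, Complex.ofReal_re, Complex.re_ofReal_mul, Complex.I_re, mul_zero,
    add_zero]
  ring

lemma integrable_perronTerm (f : ℕ → ℂ) {x σ : ℝ} (hx : 0 < x) (hσ : 1 ≤ σ) (n : ℕ) :
    MeasureTheory.Integrable (perronTerm f x σ n) := by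
  refine ((verticalIntegrable_inv_mul_add_one hσ).norm.const_mul
    (x ^ σ * ‖LSeries.term f σ n‖)).mono' ?_ (.of_forall fun y ↦ (norm_perronTerm f hx σ n y).le)
  unfold perronTerm
  rcases eq_or_ne n 0 with rfl | hn
  · simpa only [LSeries.term_zero, mul_zero] using MeasureTheory.aestronglyMeasurable_const
  · have hn₀ : (n : ℂ) ≠ 0 := by exact_mod_cast hn
    simp only [LSeries.term_of_ne_zero hn]
    have hcpow {a : ℂ} (ha : a ≠ 0) : Continuous fun y : ℝ ↦ a ^ (σ + y * Complex.I) :=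
      Continuous.const_cpow (by fun_prop) (.inl ha)
    exact (hcpow (by exact_mod_cast hx.ne')).aestronglyMeasurable.mul
      ((verticalIntegrable_inv_mul_add_one hσ).aestronglyMeasurable.mul
        (continuous_const.div (hcpow hn₀) fun y ↦ by simp [hn₀]).aestronglyMeasurable)

lemma integral_perronTerm (f : ℕ → ℂ) {x σ : ℝ} (hx : 0 < x) (hσ : 1 ≤ σ) (n : ℕ) :
    ∫ y, perronTerm f x σ n y =
      2 * π * (if n = 0 then 0 else f n * (max (1 - n / x) 0 : ℝ)) := by
  rcases eq_or_ne n 0 with rfl | hn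
  · simp [perronTerm]
  · have hterm (y : ℝ) : perronTerm f x σ n y =
        f n * (((n / x : ℝ) : ℂ) ^ (-(σ + y * Complex.I)) *
          ((σ + y * Complex.I) * (σ + y * Complex.I + 1))⁻¹) := by
      simp only [perronTerm, LSeries.term_of_ne_zero hn, ofReal_div_cpow_neg n.cast_nonneg hx,
        Complex.ofReal_natCast]
      ring
    simp only [hterm, MeasureTheory.integral_const_mul, if_neg hn]
    rw [integral_cpow_mul_inv_mul_add_one hσ (by positivity)]
    ring

lemma hasSum_mul_max_one_sub_div {f : ℕ → ℂ} {σ x : ℝ} (hσ : 1 ≤ σ) (hx : 0 < x)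
    (hf : LSeriesSummable f σ) :
    HasSum (fun n ↦ 2 * π * (if n = 0 then 0 else f n * (max (1 - n / x) 0 : ℝ)))
      (∫ y : ℝ, (x : ℂ) ^ (σ + y * Complex.I) *
        (((σ + y * Complex.I) * (σ + y * Complex.I + 1))⁻¹ * LSeries f (σ + y * Complex.I))) := by
  have hsummable : Summable fun n ↦ ∫ y, ‖perronTerm f x σ n y‖ := by
    simp only [norm_perronTerm f hx, MeasureTheory.integral_const_mul]
    exact (hf.norm.mul_left _).mul_right _
  have hsum := MeasureTheory.hasSum_integral_of_summable_integral_norm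
    (integrable_perronTerm f hx hσ) hsummable
  simp only [integral_perronTerm f hx hσ] at hsum
  simp only [perronTerm, tsum_mul_left] at hsum
  exact hsum

lemma sum_Icc_mul_one_sub_div_eq_integral {f : ℕ → ℂ} {σ x : ℝ} (hσ : 1 ≤ σ) (hx : 0 < x)
    (hf : LSeriesSummable f σ) :
    2 * π * ∑ n ∈ Icc 1 ⌊x⌋₊, f n * (1 - n / x) =
      ∫ y : ℝ, (x : ℂ) ^ (σ + y * Complex.I) *
        (((σ + y * Complex.I) * (σ + y * Complex.I + 1))⁻¹ * LSeries f (σ + y * Complex.I)) := by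
  have hsupport : ∀ n ∉ Icc 1 ⌊x⌋₊,
      (2 * π * (if n = 0 then 0 else f n * (max (1 - n / x) 0 : ℝ)) : ℂ) = 0 := fun n hn ↦ by
    rcases Nat.eq_zero_or_pos n with rfl | hn₁
    · simp
    · have hxn : x < n := Nat.lt_of_floor_lt (by simpa [Nat.succ_le_iff, hn₁] using hn)
      rw [max_eq_right (sub_nonpos.mpr ((one_le_div hx).mpr hxn.le))]
      simp
  rw [← (hasSum_sum_of_ne_finset_zero hsupport).unique (hasSum_mul_max_one_sub_div hσ hx hf),
    mul_sum]
  refine sum_congr rfl fun n hn ↦ ?_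
  obtain ⟨hn₁, hn₂⟩ := mem_Icc.mp hn
  have hnx : n / x ≤ 1 := (div_le_one hx).mpr ((Nat.le_floor_iff hx.le).mp hn₂)
  rw [if_neg (by omega), max_eq_left (sub_nonneg.mpr hnx)]
  push_cast
  rfl

lemma LSeries_moebius_eq_inv_riemannZeta {s : ℂ} (hs : 1 < s.re) :
    LSeries (fun n ↦ (moebius n : ℂ)) s = (riemannZeta s)⁻¹ := by
  refine eq_inv_of_mul_eq_one_right ?_
  rw [← LSeries_zeta_eq_riemannZeta hs]
  exact LSeries_zeta_mul_Lseries_moebius hs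

lemma sum_Icc_moebius_mul_one_sub_div_eq_integral {σ x : ℝ} (hσ : 1 < σ) (hx : 0 < x) :
    2 * π * ∑ n ∈ Icc 1 ⌊x⌋₊, (moebius n : ℂ) * (1 - n / x) =
      ∫ y : ℝ, (x : ℂ) ^ (σ + y * Complex.I) * invZetaKernel (σ + y * Complex.I) := by
  rw [sum_Icc_mul_one_sub_div_eq_integral hσ.le hx (LSeriesSummable_moebius_iff.mpr (by simpa))]
  congr 1 with y
  have hre : 1 < (σ + y * Complex.I).re := by simpa
  rw [LSeries_moebius_eq_inv_riemannZeta hre, invZetaKernel_of_ne_one]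
  rintro h
  simp [h] at hre

lemma abs_pow_mul_norm_integral_cexp_mul_le {g : ℝ → ℂ} {k : ℕ} (hg : ContDiff ℝ k g)
    (hint : ∀ j ≤ k, MeasureTheory.Integrable (iteratedDeriv j g)) (u : ℝ) :
    |u| ^ k * ‖∫ y : ℝ, Complex.exp (u * y * Complex.I) * g y‖ ≤ ∫ y, ‖iteratedDeriv k g y‖ := by
  have hfourier := congrFun (Real.fourier_iteratedDeriv (N := k) (n := k) (by exact_mod_cast hg)
    (fun j hj ↦ hint j (by exact_mod_cast hj)) le_rfl) (-u / (2 * π))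
  have hexp (y : ℝ) : -2 * π * y * (-u / (2 * π)) = u * y := by field_simp
  simp only [Real.fourier_real_eq_integral_exp_smul, hexp] at hfourier
  calc _ = ‖∫ y : ℝ, Complex.exp ((u * y : ℝ) * Complex.I) • iteratedDeriv k g y‖ := by
        rw [hfourier, norm_smul, norm_pow]
        congr 2
        · have hfreq :
              2 * π * Complex.I * ((-u / (2 * π) : ℝ) : ℂ) = ((-u : ℝ) : ℂ) * Complex.I := by
            push_cast
            field_simp
          rw [hfreq, norm_mul, Complex.norm_I, mul_one, Complex.norm_real, norm_neg, norm_eq_abs]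
        · push_cast; rfl
    _ ≤ _ := (MeasureTheory.norm_integral_le_integral_norm _).trans_eq <| by
        simp only [norm_smul, Complex.norm_exp_ofReal_mul_I, one_mul]

lemma iteratedDeriv_comp_add_mul_I {f : ℂ → ℂ} {σ : ℝ}
    (hf : ∀ y : ℝ, AnalyticAt ℂ f (σ + y * Complex.I)) (k : ℕ) :
    iteratedDeriv k (fun y : ℝ ↦ f (σ + y * Complex.I)) =
      fun y : ℝ ↦ Complex.I ^ k * iteratedDeriv k f (σ + y * Complex.I) := by
  induction k with
  | zero => simp
  | succ k ih =>
    funext y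
    rw [iteratedDeriv_succ, ih, iteratedDeriv_succ]
    have hline : HasDerivAt (fun y : ℝ ↦ (σ + y * Complex.I : ℂ)) Complex.I y := by
      simpa using (Complex.ofRealCLM.hasDerivAt.mul_const Complex.I).const_add (σ : ℂ)
    have hderiv : HasDerivAt (iteratedDeriv k f) (deriv (iteratedDeriv k f) (σ + y * Complex.I))
        (σ + y * Complex.I) := by
      rw [iteratedDeriv_eq_iterate]
      exact ((hf y).iterated_deriv k).differentiableAt.hasDerivAt
    refine ((hderiv.comp y hline).const_mul _).deriv.trans ?_
    ring

lemma contDiff_invZetaKernel_add_mul_I {σ : ℝ} (hσ : 1 ≤ σ) (k : ℕ) :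
    ContDiff ℝ k fun y : ℝ ↦ invZetaKernel (σ + y * Complex.I) := by
  refine contDiff_iff_contDiffAt.mpr fun y ↦ ?_
  have hre : 1 ≤ (σ + y * Complex.I : ℂ).re := by simpa
  have hline : ContDiff ℝ k fun y : ℝ ↦ (σ + y * Complex.I : ℂ) :=
    contDiff_const.add (Complex.ofRealCLM.contDiff.mul contDiff_const)
  exact ((analyticAt_invZetaKernel (zero_lt_one.trans_le hre)
    (riemannZeta₁_ne_zero_of_one_le_re hre)).contDiffAt.restrict_scalars ℝ).comp y
      hline.contDiffAt

lemma integrable_one_add_abs_rpow :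
    MeasureTheory.Integrable fun y : ℝ ↦ (1 + |y|) ^ (-(3 / 2) : ℝ) := by
  simpa using integrable_one_add_norm (E := ℝ) (μ := MeasureTheory.volume) (r := 3 / 2)
    (by norm_num)

lemma exists_norm_iteratedDeriv_invZetaKernel_add_mul_I_le (k : ℕ) :
    ∃ C, ∀ σ : ℝ, 1 ≤ σ → σ ≤ 2 → ∀ y : ℝ,
      ‖iteratedDeriv k (fun y : ℝ ↦ invZetaKernel (σ + y * Complex.I)) y‖ ≤
        C * (1 + |y|) ^ (-(3 / 2) : ℝ) := by
  obtain ⟨C, hC⟩ := exists_norm_iteratedDeriv_invZetaKernel_le k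
  refine ⟨C, fun σ hσ hσ₂ y ↦ ?_⟩
  have hre (y : ℝ) : 1 ≤ (σ + y * Complex.I : ℂ).re := by simpa
  rw [iteratedDeriv_comp_add_mul_I fun y ↦ analyticAt_invZetaKernel
    (zero_lt_one.trans_le (hre y)) (riemannZeta₁_ne_zero_of_one_le_re (hre y)), norm_mul, norm_pow,
    Complex.norm_I, one_pow, one_mul]
  simpa using hC (σ + y * Complex.I) (hre y) (by simpa)

lemma exists_abs_pow_mul_norm_integral_cexp_mul_invZetaKernel_le (k : ℕ) :
    ∃ C, ∀ σ : ℝ, 1 ≤ σ → σ ≤ 2 → ∀ u : ℝ,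
      |u| ^ k * ‖∫ y : ℝ, Complex.exp (u * y * Complex.I) * invZetaKernel (σ + y * Complex.I)‖ ≤
        C := by
  choose C hC using exists_norm_iteratedDeriv_invZetaKernel_add_mul_I_le
  refine ⟨∫ y : ℝ, C k * (1 + |y|) ^ (-(3 / 2) : ℝ), fun σ hσ hσ₂ u ↦ ?_⟩
  have hsmooth := contDiff_invZetaKernel_add_mul_I hσ k
  have hint (j : ℕ) (hj : j ≤ k) : MeasureTheory.Integrable
      (iteratedDeriv j fun y : ℝ ↦ invZetaKernel (σ + y * Complex.I)) :=
    (integrable_one_add_abs_rpow.const_mul (C j)).mono'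
      (hsmooth.continuous_iteratedDeriv j (by exact_mod_cast hj)).aestronglyMeasurable
      (.of_forall (hC j σ hσ hσ₂))
  exact (abs_pow_mul_norm_integral_cexp_mul_le hsmooth hint u).trans <|
    MeasureTheory.integral_mono (hint k le_rfl).norm (integrable_one_add_abs_rpow.const_mul _)
      (hC k σ hσ hσ₂)

lemma ofReal_cpow_add_mul_I {x : ℝ} (hx : 0 < x) (σ y : ℝ) :
    (x : ℂ) ^ (σ + y * Complex.I) = (x ^ σ : ℝ) * Complex.exp (log x * y * Complex.I) := by
  have hx₀ : (x : ℂ) ≠ 0 := by exact_mod_cast hx.ne'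
  rw [Complex.cpow_add _ _ hx₀, ← Complex.ofReal_cpow hx.le,
    Complex.cpow_def_of_ne_zero hx₀ (y * _), ← Complex.ofReal_log hx.le, mul_assoc]

lemma exists_log_pow_mul_abs_sum_moebius_mul_one_sub_div_le (k : ℕ) :
    ∃ C, ∀ x : ℝ, 1 ≤ x →
      log x ^ k * |∑ n ∈ Icc 1 ⌊x⌋₊, (moebius n : ℝ) * (1 - n / x)| ≤ C * x := by
  obtain ⟨C, hC⟩ := exists_abs_pow_mul_norm_integral_cexp_mul_invZetaKernel_le k
  refine ⟨C * exp 1 / (2 * π), fun x hx ↦ ?_⟩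
  have hx₀ : 0 < x := by linarith
  have hlog : 0 ≤ log x := log_nonneg hx
  set σ := 1 + (1 + log x)⁻¹
  have hσ : 1 < σ := lt_add_of_pos_right _ (by positivity)
  have hσ₂ : σ ≤ 2 := by linarith [inv_le_one_of_one_le₀ (show 1 ≤ 1 + log x by linarith)]
  have hpow : x ^ σ ≤ exp 1 * x := by
    rw [rpow_def_of_pos hx₀, mul_add, mul_one, exp_add, exp_log hx₀, mul_comm]
    gcongr
    rw [← div_eq_mul_inv, div_le_one (by positivity)]
    linarith
  set I := ∫ y : ℝ, Complex.exp (log x * y * Complex.I) * invZetaKernel (σ + y * Complex.I)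
  have hperron : 2 * π * |∑ n ∈ Icc 1 ⌊x⌋₊, (moebius n : ℝ) * (1 - n / x)| = x ^ σ * ‖I‖ := by
    have h := sum_Icc_moebius_mul_one_sub_div_eq_integral hσ hx₀
    simp only [ofReal_cpow_add_mul_I hx₀, mul_assoc, MeasureTheory.integral_const_mul] at h
    have hnorm := congrArg norm h
    simp only [← mul_assoc] at hnorm
    rw [norm_mul _ I, Complex.norm_of_nonneg (by positivity)] at hnorm
    rw [← hnorm, ← abs_of_pos two_pi_pos, ← abs_mul, ← norm_eq_abs, ← Complex.norm_real]
    push_cast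
    rfl
  rw [div_mul_eq_mul_div, le_div_iff₀ two_pi_pos]
  calc _ = log x ^ k * (2 * π * |∑ n ∈ Icc 1 ⌊x⌋₊, (moebius n : ℝ) * (1 - n / x)|) := by ring
    _ = x ^ σ * (|log x| ^ k * ‖I‖) := by rw [hperron, abs_of_nonneg hlog]; ring
    _ ≤ (exp 1 * x) * C := by
      gcongr
      exact hC σ hσ.le hσ₂ (log x)
    _ = _ := by ring

lemma exists_abs_sum_moebius_mul_one_sub_div_le (k : ℕ) :
    ∃ C > 0, ∀ x : ℝ, 1 ≤ x →
      |∑ n ∈ Icc 1 ⌊x⌋₊, (moebius n : ℝ) * (1 - n / x)| ≤ C * (x / (1 + log x) ^ k) := by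
  obtain ⟨A, hA⟩ := exists_log_pow_mul_abs_sum_moebius_mul_one_sub_div_le 0
  obtain ⟨B, hB⟩ := exists_log_pow_mul_abs_sum_moebius_mul_one_sub_div_le k
  refine ⟨max (2 ^ (k - 1) * (A + B)) 1, by positivity, fun x hx ↦ ?_⟩
  have hlog : 0 ≤ log x := log_nonneg hx
  have hA' := hA x hx
  rw [pow_zero, one_mul] at hA'
  rw [mul_div_assoc', le_div_iff₀ (by positivity)]
  set W := |∑ n ∈ Icc 1 ⌊x⌋₊, (moebius n : ℝ) * (1 - n / x)|
  calc W * (1 + log x) ^ k ≤ W * (2 ^ (k - 1) * (1 ^ k + log x ^ k)) := by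
        gcongr
        exact add_pow_le zero_le_one hlog k
    _ = 2 ^ (k - 1) * (W + log x ^ k * W) := by ring
    _ ≤ 2 ^ (k - 1) * (A * x + B * x) := by
        gcongr ?_ * (?_ + ?_)
        exact hB x hx
    _ = 2 ^ (k - 1) * (A + B) * x := by ring
    _ ≤ _ := by gcongr; exact le_max_left _ _

/-! ### The Mertens function -/

/-- The Mertens function `M(y) = ∑_{n ≤ y} μ(n)`, with a real argument because it is evaluated at
the quotients `y / p`. -/
noncomputable def mertens (y : ℝ) : ℝ := ∑ n ∈ Icc 1 ⌊y⌋₊, (moebius n : ℝ)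

lemma abs_moebius_cast_le_one (n : ℕ) : |(moebius n : ℝ)| ≤ 1 := by
  exact_mod_cast abs_moebius_le_one

lemma mul_abs_sum_Icc_floor_le {a : ℕ → ℝ} (ha : ∀ n, |a n| ≤ 1) {x h : ℝ} (hx : 0 ≤ x)
    (hh : 0 ≤ h) :
    h * |∑ n ∈ Icc 1 ⌊x⌋₊, a n| ≤ |∑ n ∈ Icc 1 ⌊x + h⌋₊, a n * (x + h - n)| +
      |∑ n ∈ Icc 1 ⌊x⌋₊, a n * (x - n)| + h * (h + 1) := by
  have hfloor : ⌊x⌋₊ ≤ ⌊x + h⌋₊ := Nat.floor_mono (by linarith)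
  set T := ∑ n ∈ Ioc ⌊x⌋₊ ⌊x + h⌋₊, a n * (x + h - n)
  have hsplit : ∑ n ∈ Icc 1 ⌊x + h⌋₊, a n * (x + h - n) =
      ∑ n ∈ Icc 1 ⌊x⌋₊, a n * (x - n) + h * ∑ n ∈ Icc 1 ⌊x⌋₊, a n + T := by
    have hIcc (m : ℕ) : Icc 1 m = Ioc 0 m := Icc_add_one_left_eq_Ioc 0 m
    rw [mul_sum, ← sum_add_distrib, hIcc, hIcc, ← sum_Ioc_consecutive _ (Nat.zero_le _) hfloor]
    congr 1
    exact sum_congr rfl fun n _ ↦ by ring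
  have hT : |T| ≤ h * (h + 1) := by
    have hterm : ∀ n ∈ Ioc ⌊x⌋₊ ⌊x + h⌋₊, ‖a n * (x + h - n)‖ ≤ h := fun n hn ↦ by
      obtain ⟨hxn, hnx⟩ := mem_Ioc.mp hn
      have hxn := Nat.lt_of_floor_lt hxn
      have hnx := (Nat.le_floor_iff (by positivity)).mp hnx
      rw [norm_mul, norm_of_nonneg (sub_nonneg.mpr hnx)]
      exact (mul_le_of_le_one_left (by linarith) (ha n)).trans (by linarith)
    have hcard : ((Ioc ⌊x⌋₊ ⌊x + h⌋₊).card : ℝ) ≤ h + 1 := by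
      rw [Nat.card_Ioc, Nat.cast_sub hfloor]
      linarith [Nat.floor_le (add_nonneg hx hh), Nat.lt_floor_add_one x]
    calc |T| ≤ (Ioc ⌊x⌋₊ ⌊x + h⌋₊).card • h := norm_sum_le_of_le _ hterm |>.trans_eq (by simp)
      _ = h * (Ioc ⌊x⌋₊ ⌊x + h⌋₊).card := by rw [nsmul_eq_mul, mul_comm]
      _ ≤ h * (h + 1) := by gcongr
  have hM : h * ∑ n ∈ Icc 1 ⌊x⌋₊, a n = ∑ n ∈ Icc 1 ⌊x + h⌋₊, a n * (x + h - n) -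
      ∑ n ∈ Icc 1 ⌊x⌋₊, a n * (x - n) - T := by linarith
  rw [← abs_of_nonneg hh, ← abs_mul, hM, abs_of_nonneg hh]
  exact (abs_sub _ _).trans (add_le_add (abs_sub _ _) hT)

lemma exists_abs_mertens_le (k : ℕ) :
    ∃ C > 0, ∀ y : ℝ, 1 ≤ y → |mertens y| ≤ C * (y / (1 + log y) ^ k) := by
  obtain ⟨C, hC, hW⟩ := exists_abs_sum_moebius_mul_one_sub_div_le (2 * k)
  refine ⟨5 * C + 1 + k.factorial * exp 1, by positivity, fun x hx ↦ ?_⟩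
  have hx₀ : 0 < x := by linarith
  have hL : 1 ≤ 1 + log x := by linarith [log_nonneg hx]
  set L := 1 + log x
  set h := x / L ^ k
  have hh : 0 < h := by positivity
  have hcesaro {z : ℝ} (hxz : x ≤ z) :
      |∑ n ∈ Icc 1 ⌊z⌋₊, (moebius n : ℝ) * (z - n)| ≤ C * (z / L ^ k) ^ 2 := by
    have hz₀ : 0 < z := hx₀.trans_le hxz
    calc _ = z * |∑ n ∈ Icc 1 ⌊z⌋₊, (moebius n : ℝ) * (1 - n / z)| := by
          rw [← abs_of_pos hz₀, ← abs_mul, mul_sum, abs_of_pos hz₀]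
          congr 1
          refine sum_congr rfl fun n _ ↦ ?_
          field_simp
      _ ≤ z * (C * (z / (1 + log z) ^ (2 * k))) := by gcongr; exact hW z (hx.trans hxz)
      _ ≤ z * (C * (z / L ^ (2 * k))) := by
          gcongr
          exact add_le_add_right (log_le_log hx₀ hxz) 1
      _ = C * (z / L ^ k) ^ 2 := by rw [mul_comm 2 k, pow_mul, div_pow, sq z]; ring
  have hsmooth := mul_abs_sum_Icc_floor_le abs_moebius_cast_le_one hx₀.le hh.le
  have hone : 1 ≤ k.factorial * exp 1 * h := by
    have := pow_div_factorial_le_exp L (by positivity) k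
    rw [div_le_iff₀ (by positivity), exp_add, exp_log hx₀] at this
    rw [mul_div_assoc', le_div_iff₀ (by positivity)]
    linarith
  have hxh : (x + h) / L ^ k ≤ 2 * h := by
    rw [two_mul, add_div]
    gcongr
    exact div_le_self hh.le (one_le_pow₀ hL)
  refine le_of_mul_le_mul_left ?_ hh
  calc h * |mertens x| ≤ C * ((x + h) / L ^ k) ^ 2 + C * (x / L ^ k) ^ 2 + h * (h + 1) :=
        hsmooth.trans (by gcongr <;> exact hcesaro (by linarith))
    _ ≤ C * (2 * h) ^ 2 + C * h ^ 2 + h * (h + k.factorial * exp 1 * h) := by gcongr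
    _ = h * ((5 * C + 1 + k.factorial * exp 1) * h) := by ring

/-- The majorant `y / (4 + log y)²` of the Mertens function. The shift `4` makes
`mertensMajorant y / √y` increasing, so that the majorant decays geometrically under division by a
prime. -/
noncomputable def mertensMajorant (y : ℝ) : ℝ := y / (4 + log y) ^ 2

lemma mertensMajorant_nonneg {y : ℝ} (hy : 0 ≤ y) : 0 ≤ mertensMajorant y := by
  unfold mertensMajorant
  positivity

lemma mertensMajorant_le_sqrt_mul {y z : ℝ} (hy : 1 ≤ y) (hyz : y ≤ z) :
    mertensMajorant y ≤ √(y / z) * mertensMajorant z := by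
  have hy₀ : 0 < y := by linarith
  have hz₀ : 0 < z := by linarith
  have hlog : 0 ≤ log y := log_nonneg hy
  have hlog' : log z = log y + log (z / y) := by rw [log_div hz₀.ne' hy₀.ne']; ring
  have hquot : 0 ≤ log (z / y) := log_nonneg ((one_le_div hy₀).mpr hyz)
  have hshift : 4 + log z ≤ exp (log (z / y) / 4) * (4 + log y) := by
    calc 4 + log z ≤ (log (z / y) / 4 + 1) * (4 + log y) := by
          rw [hlog']
          nlinarith [mul_nonneg hquot hlog]
      _ ≤ _ := by gcongr; exact add_one_le_exp _
  have hsqrt : √(z / y) = exp (log (z / y) / 4) ^ 2 := by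
    rw [← exp_nat_mul, ← exp_log (show 0 < √(z / y) by positivity), log_sqrt (by positivity)]
    ring_nf
  have hsq : (4 + log z) ^ 2 ≤ √(z / y) * (4 + log y) ^ 2 := by
    rw [hsqrt, ← mul_pow]
    have : 0 ≤ log z := log_nonneg (hy.trans hyz)
    gcongr
  have hroot : √(y / z) = √(z / y) * (y / z) := by
    rw [← inv_div z y, sqrt_inv, ← div_eq_mul_inv, inv_eq_one_div, sqrt_div_self']
  have hlogz : 0 ≤ log z := log_nonneg (hy.trans hyz)
  rw [mertensMajorant, mertensMajorant, hroot, div_le_iff₀ (by positivity)]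
  calc y = y / (4 + log z) ^ 2 * (4 + log z) ^ 2 := by field_simp
    _ ≤ y / (4 + log z) ^ 2 * (√(z / y) * (4 + log y) ^ 2) := by gcongr
    _ = √(z / y) * (y / z) * (z / (4 + log z) ^ 2) * (4 + log y) ^ 2 := by field_simp

lemma monotoneOn_mertensMajorant : MonotoneOn mertensMajorant (Set.Ici 1) := fun y hy z hz hyz ↦ by
  have hz₀ : 0 ≤ z := zero_le_one.trans hz
  refine (mertensMajorant_le_sqrt_mul hy hyz).trans
    (mul_le_of_le_one_left (mertensMajorant_nonneg hz₀) ?_)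
  exact sqrt_le_one.mpr (div_le_one_of_le₀ hyz hz₀)

lemma mertensMajorant_div_le {y a : ℝ} (ha : 2 ≤ a) (hay : a ≤ y) :
    mertensMajorant (y / a) ≤ 3 / 4 * mertensMajorant y := by
  have ha₀ : 0 < a := by linarith
  have hy₀ : 0 < y := by linarith
  refine (mertensMajorant_le_sqrt_mul ((one_le_div ha₀).mpr hay)
    (div_le_self hy₀.le (by linarith))).trans ?_
  gcongr
  · exact mertensMajorant_nonneg hy₀.le
  · rw [div_right_comm, div_self hy₀.ne', sqrt_le_left (by norm_num), div_le_iff₀ ha₀]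
    linarith

lemma exists_abs_mertens_le_mertensMajorant :
    ∃ C > 0, ∀ y : ℝ, 1 ≤ y → |mertens y| ≤ C * mertensMajorant y := by
  obtain ⟨C, hC, hM⟩ := exists_abs_mertens_le 2
  refine ⟨C * 16, by positivity, fun y hy ↦ (hM y hy).trans ?_⟩
  have hlog : 0 ≤ log y := log_nonneg hy
  rw [mul_assoc]
  gcongr
  rw [mertensMajorant, mul_div_assoc', div_le_div_iff₀ (by positivity) (by positivity)]
  calc y * (4 + log y) ^ 2 ≤ y * (4 * (1 + log y)) ^ 2 := by gcongr; linarith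
    _ = 16 * y * (1 + log y) ^ 2 := by ring

lemma mertensMajorant_div_add_one_le {x a : ℝ} (ha : 1 ≤ a) (hax : a + 1 ≤ x) :
    mertensMajorant (x / (a + 1)) ≤
      2 * x / (4 + log (x / (a + 1))) - 2 * x / (4 + log (x / a)) := by
  have hx₀ : 0 < x := by linarith
  have ha₀ : 0 < a := by linarith
  have hratio : 0 < (a + 1) / a := by positivity
  rw [mertensMajorant]
  set u := 4 + log (x / a)
  set v := 4 + log (x / (a + 1))
  have hv : 4 ≤ v := le_add_of_nonneg_right (log_nonneg ((one_le_div (by positivity)).mpr hax))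
  have hdiff : u - v = log ((a + 1) / a) := by
    simp only [u, v]
    rw [log_div hx₀.ne' ha₀.ne', log_div hx₀.ne' (by positivity),
      log_div (by positivity) ha₀.ne']
    ring
  have hlower : 1 / (a + 1) ≤ u - v := by
    rw [hdiff]
    refine le_trans (le_of_eq ?_) (one_sub_inv_le_log_of_pos hratio)
    field_simp
    ring
  have hupper : u ≤ 2 * v := by
    have hle : (a + 1) / a ≤ 2 := by
      rw [div_le_iff₀ ha₀]
      linarith
    linarith [log_le_sub_one_of_pos hratio]
  have hgap : 0 < u - v := lt_of_lt_of_le (by positivity) hlower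
  have hu : 0 < u := by linarith
  calc x / (a + 1) / v ^ 2 = 2 * x * (1 / (a + 1)) / (2 * v * v) := by field_simp
    _ ≤ 2 * x * (u - v) / (u * v) := by gcongr
    _ = 2 * x / v - 2 * x / u := by field_simp

lemma sum_mertensMajorant_div_le_div {x : ℝ} {N : ℕ} (hN : 1 ≤ N) (hNx : N ≤ x) :
    ∑ n ∈ Icc 1 N, mertensMajorant (x / n) ≤ 2 * x / (4 + log (x / N)) := by
  induction N, hN using Nat.le_induction with
  | base =>
    have hx : 1 ≤ x := by simpa using hNx
    have hlog : 0 ≤ log x := log_nonneg hx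
    simp only [Icc_self, sum_singleton, Nat.cast_one, div_one, mertensMajorant]
    gcongr
    · linarith
    · nlinarith
  | succ n hn ih =>
    push_cast at hNx ⊢
    rw [sum_Icc_succ_top (by omega)]
    push_cast
    linarith [ih (by linarith), mertensMajorant_div_add_one_le (by exact_mod_cast hn) hNx]

lemma sum_mul_nonneg_of_antitoneOn {c w : ℕ → ℝ} {N : ℕ} (hw : AntitoneOn w (Set.Icc 1 N))
    (hw₀ : 0 ≤ w N) (hc : ∀ m ≤ N, 0 ≤ ∑ n ∈ Icc 1 m, c n) :
    0 ≤ ∑ n ∈ Icc 1 N, c n * w n := by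
  have habel : ∀ m ≤ N, (∑ n ∈ Icc 1 m, c n) * w m ≤ ∑ n ∈ Icc 1 m, c n * w n := fun m ↦ by
    induction m with
    | zero => simp
    | succ m ih =>
      intro hm
      have hmono : (∑ n ∈ Icc 1 m, c n) * w (m + 1) ≤ (∑ n ∈ Icc 1 m, c n) * w m := by
        rcases Nat.eq_zero_or_pos m with rfl | hm₀
        · simp
        · exact mul_le_mul_of_nonneg_left
            (hw ⟨hm₀, by omega⟩ ⟨by omega, hm⟩ m.le_succ) (hc m (by omega))
      rw [sum_Icc_succ_top (by omega), sum_Icc_succ_top (by omega), add_mul]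
      exact add_le_add_left (hmono.trans (ih (by omega))) _
  exact (mul_nonneg (hc N le_rfl) hw₀).trans (habel N le_rfl)

lemma sum_Icc_log_prime_le (m : ℕ) :
    ∑ n ∈ Icc 1 m, (if n.Prime then Real.log n else 0) ≤ Real.log 4 * m := by
  rw [← sum_filter]
  simpa [Chebyshev.theta, ← Icc_add_one_left_eq_Ioc] using
    Chebyshev.theta_le_log4_mul_x (m.cast_nonneg : (0 : ℝ) ≤ m)

lemma sum_log_prime_mul_mertensMajorant_div_le {x : ℝ} (hx : 1 ≤ x) :
    ∑ p ∈ Icc 1 ⌊x⌋₊ with p.Prime, Real.log p * mertensMajorant (x / p) ≤ Real.log 4 / 2 * x := by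
  have hx₀ : 0 < x := by linarith
  have hN : 1 ≤ ⌊x⌋₊ := Nat.floor_pos.mpr hx
  have hNx : (⌊x⌋₊ : ℝ) ≤ x := Nat.floor_le hx₀.le
  have hanti : AntitoneOn (fun n : ℕ ↦ mertensMajorant (x / n)) (Set.Icc 1 ⌊x⌋₊) :=
    fun m hm n hn hmn ↦ by
      have hm₀ : (0 : ℝ) < m := by exact_mod_cast hm.1
      have hn₀ : (0 : ℝ) < n := by exact_mod_cast hn.1
      have hquot : 1 ≤ x / n := (one_le_div hn₀).mpr ((Nat.le_floor_iff hx₀.le).mp hn.2)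
      have hle : x / n ≤ x / m := by gcongr
      exact monotoneOn_mertensMajorant hquot (hquot.trans hle) hle
  have habel := sum_mul_nonneg_of_antitoneOn
    (c := fun n ↦ Real.log 4 - if n.Prime then Real.log n else 0) hanti
    (mertensMajorant_nonneg (by positivity)) fun m _ ↦ by
      rw [sum_sub_distrib, sum_const, Nat.card_Icc, Nat.add_sub_cancel, nsmul_eq_mul, mul_comm]
      exact sub_nonneg.mpr (sum_Icc_log_prime_le m)
  simp only [sub_mul, sum_sub_distrib, ite_mul, zero_mul, ← sum_filter, ← mul_sum] at habel
  calc _ ≤ Real.log 4 * ∑ n ∈ Icc 1 ⌊x⌋₊, mertensMajorant (x / n) := sub_nonneg.mp habel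
    _ ≤ Real.log 4 * (2 * x / (4 + log (x / ⌊x⌋₊))) := by
      gcongr
      exact sum_mertensMajorant_div_le_div hN hNx
    _ ≤ Real.log 4 * (2 * x / 4) := by
      gcongr
      exact le_add_of_nonneg_right (log_nonneg ((one_le_div (by positivity)).mpr hNx))
    _ = _ := by ring

lemma mertensMajorant_div_le_add {x a : ℝ} (hx : 1 < x) (ha : 1 ≤ a) :
    mertensMajorant (x / a) ≤
      4 * x / log x ^ 2 * a⁻¹ + 2 / log x * (log a * mertensMajorant (x / a)) := by
  have hx₀ : 0 < x := by linarith
  have hlogx : 0 < log x := log_pos hx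
  have hloga : 0 ≤ log a := log_nonneg ha
  have hmaj := mertensMajorant_nonneg (show 0 ≤ x / a by positivity)
  rcases le_or_gt (log a) (log x / 2) with hsmall | hlarge
  · refine le_add_of_le_of_nonneg ?_ (by positivity)
    calc mertensMajorant (x / a) ≤ x / a / (log x / 2) ^ 2 := by
          rw [mertensMajorant, log_div hx₀.ne' (by positivity)]
          gcongr
          linarith
      _ = 4 * x / log x ^ 2 * a⁻¹ := by field_simp; norm_num
  · refine le_add_of_nonneg_of_le (by positivity) ?_
    rw [← mul_assoc]
    refine le_mul_of_one_le_left hmaj ?_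
    rw [div_mul_eq_mul_div, one_le_div hlogx]
    linarith

lemma sum_prime_mertensMajorant_div_le {x : ℝ} (hx : 2 ≤ x) :
    ∑ p ∈ Icc 1 ⌊x⌋₊ with p.Prime, mertensMajorant (x / p) ≤ 14 * (x / log x) := by
  have hlogx : 1 / 2 ≤ log x := by
    linarith [log_two_gt_d9, log_le_log two_pos hx]
  have hharmonic : ∑ p ∈ Icc 1 ⌊x⌋₊ with p.Prime, (p : ℝ)⁻¹ ≤ 1 + log x := by
    refine (sum_le_sum_of_subset_of_nonneg (filter_subset _ _) fun _ _ _ ↦ by positivity).trans ?_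
    simpa [harmonic_eq_sum_Icc] using harmonic_floor_le_one_add_log x (by linarith)
  have hlog4 : Real.log 4 ≤ 2 := by
    rw [show (4 : ℝ) = 2 ^ 2 by norm_num, log_pow]
    push_cast
    linarith [log_two_lt_d9]
  have hterm : ∀ p ∈ {p ∈ Icc 1 ⌊x⌋₊ | p.Prime}, mertensMajorant (x / p) ≤
      4 * x / log x ^ 2 * (p : ℝ)⁻¹ + 2 / log x * (Real.log p * mertensMajorant (x / p)) :=
    fun p hp ↦ mertensMajorant_div_le_add (by linarith)
      (by exact_mod_cast (mem_Icc.mp (mem_filter.mp hp).1).1)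
  calc _ ≤ 4 * x / log x ^ 2 * ∑ p ∈ Icc 1 ⌊x⌋₊ with p.Prime, (p : ℝ)⁻¹ +
        2 / log x * ∑ p ∈ Icc 1 ⌊x⌋₊ with p.Prime, Real.log p * mertensMajorant (x / p) := by
        rw [mul_sum, mul_sum, ← sum_add_distrib]
        exact sum_le_sum hterm
    _ ≤ 4 * x / log x ^ 2 * (1 + log x) + 2 / log x * (2 / 2 * x) := by
        gcongr
        exact (sum_log_prime_mul_mertensMajorant_div_le (by linarith)).trans (by gcongr)
    _ = (4 / log x + 6) * (x / log x) := by field_simp; ring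
    _ ≤ 14 * (x / log x) := by
        have hinv : 4 / log x ≤ 8 := by rw [div_le_iff₀ (by linarith)]; linarith
        gcongr
        linarith

/-! ### Möbius sums over multiples of a prime -/

/-- The sum `S_p(y)` of `μ(n)` over the multiples `n ≤ y` of `p`, which arises when `ω(n)` is
expanded as a sum over the primes `p ∣ n`. -/
noncomputable def mertensMultiples (p : ℕ) (y : ℝ) : ℝ :=
  ∑ n ∈ Icc 1 ⌊y⌋₊ with p ∣ n, (moebius n : ℝ)

lemma mertensMultiples_eq_zero {p : ℕ} {y : ℝ} (hy : y < p) : mertensMultiples p y = 0 := by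
  refine sum_eq_zero fun n hn ↦ absurd (mem_filter.mp hn).2 fun hdvd ↦ ?_
  obtain ⟨hn₁, hny⟩ := mem_Icc.mp (mem_filter.mp hn).1
  have hpn := Nat.le_of_dvd hn₁ hdvd
  have hp := Nat.pos_of_dvd_of_pos hdvd hn₁
  exact (hpn.trans hny).not_gt ((Nat.floor_lt' hp.ne').mpr hy)

lemma moebius_prime_mul {p : ℕ} (hp : p.Prime) (m : ℕ) :
    moebius (p * m) = if p ∣ m then 0 else -moebius m := by
  split_ifs with h
  · refine moebius_eq_zero_of_not_squarefree fun hsq ↦ hp.one_lt.ne' ?_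
    exact Nat.isUnit_iff.mp (hsq p (mul_dvd_mul_left p h))
  · rw [isMultiplicative_moebius.map_mul_of_coprime ((hp.coprime_iff_not_dvd).mpr h),
      moebius_apply_prime hp, neg_one_mul]

lemma filter_dvd_Icc_one_eq_image {p : ℕ} (hp : 0 < p) (N : ℕ) :
    {n ∈ Icc 1 N | p ∣ n} = (Icc 1 (N / p)).image (p * ·) := by
  ext n
  simp only [mem_filter, mem_Icc, mem_image]
  constructor
  · rintro ⟨⟨hn₁, hnN⟩, m, rfl⟩
    exact ⟨m, ⟨Nat.pos_of_mul_pos_left hn₁, (Nat.le_div_iff_mul_le hp).mpr (mul_comm p m ▸ hnN)⟩,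
      rfl⟩
  · rintro ⟨m, ⟨hm₁, hmN⟩, rfl⟩
    exact ⟨⟨Nat.mul_pos hp hm₁, mul_comm m p ▸ (Nat.le_div_iff_mul_le hp).mp hmN⟩,
      dvd_mul_right p m⟩

lemma mertensMultiples_eq_sub {p : ℕ} (hp : p.Prime) (y : ℝ) :
    mertensMultiples p y = mertensMultiples p (y / p) - mertens (y / p) := by
  have hsplit := sum_filter_add_sum_filter_not (Icc 1 ⌊y / p⌋₊) (p ∣ ·) fun n ↦ (moebius n : ℝ)
  rw [mertensMultiples, filter_dvd_Icc_one_eq_image hp.pos,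
    sum_image fun _ _ _ _ ↦ Nat.eq_of_mul_eq_mul_left hp.pos, ← Nat.floor_div_natCast,
    mertensMultiples, mertens, ← hsplit, sub_add_cancel_left, sum_filter, ← sum_neg_distrib]
  refine sum_congr rfl fun m _ ↦ ?_
  rw [moebius_prime_mul hp]
  split_ifs <;> simp_all

lemma abs_mertensMultiples_le {C : ℝ} (hC : 0 ≤ C)
    (hM : ∀ y, 1 ≤ y → |mertens y| ≤ C * mertensMajorant y) {p : ℕ} (hp : p.Prime) {y : ℝ}
    (hpy : p ≤ y) :
    |mertensMultiples p y| ≤ 4 * C * mertensMajorant (y / p) := by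
  have hp₂ : (2 : ℝ) ≤ p := by exact_mod_cast hp.two_le
  induction h : ⌊y⌋₊ using Nat.strong_induction_on generalizing y with
  | _ N ih =>
    have hquot : 1 ≤ y / p := (one_le_div (by linarith)).mpr hpy
    have hM₁ := hM _ hquot
    have hnext : |mertensMultiples p (y / p)| ≤ 3 * (C * mertensMajorant (y / p)) := by
      rcases lt_or_ge (y / p) p with hlt | hge
      · rw [mertensMultiples_eq_zero hlt, abs_zero]
        linarith [abs_nonneg (mertens (y / p))]
      · have hdecr : ⌊y / p⌋₊ < N := by
          rw [Nat.floor_div_natCast, h]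
          exact Nat.div_lt_self (h ▸ Nat.floor_pos.mpr (by linarith)) hp.one_lt
        linarith [ih _ hdecr hge rfl, mul_le_mul_of_nonneg_left (mertensMajorant_div_le hp₂ hge) hC]
    rw [mertensMultiples_eq_sub hp]
    linarith [abs_sub (mertensMultiples p (y / p)) (mertens (y / p))]

lemma sum_moebius_mul_card_primeFactors (x : ℝ) :
    ∑ n ∈ Icc 1 ⌊x⌋₊, (moebius n : ℝ) * (n.primeFactors.card : ℝ) =
      ∑ p ∈ Icc 1 ⌊x⌋₊ with p.Prime, mertensMultiples p x := by
  have hprimes {n : ℕ} (hn : n ∈ Icc 1 ⌊x⌋₊) :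
      n.primeFactors = {p ∈ {p ∈ Icc 1 ⌊x⌋₊ | p.Prime} | p ∣ n} := by
    obtain ⟨hn₁, hnx⟩ := mem_Icc.mp hn
    ext p
    simp only [Nat.mem_primeFactors, mem_filter, mem_Icc]
    constructor
    · rintro ⟨hp, hdvd, -⟩
      exact ⟨⟨⟨hp.one_le, (Nat.le_of_dvd hn₁ hdvd).trans hnx⟩, hp⟩, hdvd⟩
    · rintro ⟨⟨-, hp⟩, hdvd⟩
      exact ⟨hp, hdvd, by omega⟩
  calc _ = ∑ n ∈ Icc 1 ⌊x⌋₊, ∑ p ∈ Icc 1 ⌊x⌋₊ with p.Prime,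
        if p ∣ n then (moebius n : ℝ) else 0 := sum_congr rfl fun n hn ↦ by
        rw [← sum_filter, sum_const, nsmul_eq_mul, mul_comm, hprimes hn]
    _ = _ := by
        rw [sum_comm]
        exact sum_congr rfl fun p _ ↦ (sum_filter _ _).symm

/-- There is a constant `C > 0` such that for all `x ≥ 2`,
`|Σ_{n ≤ x} μ(n) ω(n)| ≤ C x / log x`. -/
theorem moebius_omega_sum_bound :
    ∃ C > (0 : ℝ), ∀ x : ℝ, 2 ≤ x →
      |∑ n ∈ Finset.Icc 1 ⌊x⌋₊, (moebius n : ℝ) * (n.primeFactors.card : ℝ)|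
        ≤ C * x / Real.log x := by
  obtain ⟨C, hC, hM⟩ := exists_abs_mertens_le_mertensMajorant
  refine ⟨4 * C * 14, by positivity, fun x hx ↦ ?_⟩
  have hx₀ : 0 ≤ x := by linarith
  calc |∑ n ∈ Icc 1 ⌊x⌋₊, (moebius n : ℝ) * (n.primeFactors.card : ℝ)|
      = |∑ p ∈ Icc 1 ⌊x⌋₊ with p.Prime, mertensMultiples p x| := by
        rw [sum_moebius_mul_card_primeFactors]
    _ ≤ ∑ p ∈ Icc 1 ⌊x⌋₊ with p.Prime, |mertensMultiples p x| := abs_sum_le_sum_abs _ _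
    _ ≤ ∑ p ∈ Icc 1 ⌊x⌋₊ with p.Prime, 4 * C * mertensMajorant (x / p) :=
        sum_le_sum fun p hp ↦ by
          obtain ⟨hpx, hp⟩ := mem_filter.mp hp
          exact abs_mertensMultiples_le hC.le hM hp ((Nat.le_floor_iff hx₀).mp (mem_Icc.mp hpx).2)
    _ = 4 * C * ∑ p ∈ Icc 1 ⌊x⌋₊ with p.Prime, mertensMajorant (x / p) := (mul_sum _ _ _).symm
    _ ≤ 4 * C * (14 * (x / log x)) := by gcongr; exact sum_prime_mertensMajorant_div_le hx
    _ = 4 * C * 14 * x / log x := by ring
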